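/- Refined L⁶ inequality in the anisotropic Sobolev space: there is a universal constant C such that for every f ∈ C_c^∞(ℝ²), ‖f‖_{L⁶(ℝ²)} ≤ C (sup_{M,N} (MN)^{−1/6} ‖Q_{M,N}f‖_{L^∞(ℝ²)})^{1/3} ‖f‖_{Ḣ_h^{2/3}}^{2/3}, where the supremum is over all dyadic M, N > 0; in particular ‖f‖_{L⁶(ℝ²)} ≤ C ‖f‖_{Ḣ_h^{2/3}}. -/

import Mathlib

/-!
The proof is a pointwise dyadic-threshold argument applied three times.

The scalar core is `cubic_bound`: if for every `k` a quantity `a` splits into a part at most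
`2^{k/3} b` and a part `t k` with `2^{2k/3} t k ≤ S`, then choosing the threshold `k` where the first
part is about `a / 2` gives `a³ ≲ b² S`. In one dimension, with `a = |g(y)|²`, the low frequencies of
`g` telescope into Littlewood–Paley pieces (`low_bound`), the high frequencies are square-summable
after integration in `y` by Plancherel (`high_bound`), and the result is
`∫ |g|⁶ ≲ (sup_j 2^{-j/3} ‖Q_j g‖_∞²)² ‖g‖²` with the `Ḣ^{1/3}` norm on the right (`refined_1d`).

In the plane let `T 1 x` be the Fourier transform of `f(x, ·)`, let `W x` be the sum over `k` of
`2^{2k/3}` times the `Ḣ^{1/3}_y` energy of the part of `f(x, ·)` with `x`-frequency above `2^k`, let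
`B` be the supremum in the statement, and let `H²` be the squared anisotropic norm, so that
`∫ W ≲ H²` (`W_lintegral`). The threshold argument in `x`, with the same high-frequency parts,
yields two bounds on the line above `x`:

* measured in the `Ḣ^{1/3}_y` energy `e(x)` of `f(x, ·)`, with low frequencies bounded by Bernstein's
  inequality: `e³ ≲ H⁴ W` (`En_T_one_cube`);
* measured in the supremum of `Q_l f(x, ·)` for each `l`, with low frequencies bounded by `B`:
  `(sup_l 2^{-l/3} ‖Q_l f(x, ·)‖_∞²)³ ≲ B⁴ W` (`piece_cube`).

Inserting both in the one-dimensional inequality in `y` gives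
`(∫ |f(x, y)|⁶ dy)³ ≲ (B⁴ W)² H⁴ W ≲ (B² H² W)³`, where the last step uses `B ≲ H`, again by
Bernstein. Taking cube roots and integrating in `x` gives `‖f‖₆⁶ ≲ B² H⁴`, which is the refined
inequality; the plain one follows from `B ≲ H` once more.
-/

open MeasureTheory Real Complex Filter
open scoped ENNReal

/-- The Fourier transform on `ℝ²`. -/
noncomputable def ft (f : ℝ × ℝ → ℂ) : ℝ × ℝ → ℂ := fun ξ =>
  ∫ x : ℝ × ℝ, Complex.exp (-2 * Real.pi * (x.1 * ξ.1 + x.2 * ξ.2) * Complex.I) * f x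

/-- The inverse Fourier transform on `ℝ²`. -/
noncomputable def ftInv (f : ℝ × ℝ → ℂ) : ℝ × ℝ → ℂ := fun x =>
  ∫ ξ : ℝ × ℝ, Complex.exp (2 * Real.pi * (x.1 * ξ.1 + x.2 * ξ.2) * Complex.I) * f ξ

/-- A fixed smooth bump function: `φ₀ = 1` on `[-1,1]` and `φ₀ = 0` outside `[-2,2]`. -/
def IsBump (φ₀ : ℝ → ℝ) : Prop :=
  ContDiff ℝ (⊤ : ℕ∞) φ₀ ∧ (∀ x : ℝ, |x| ≤ 1 → φ₀ x = 1) ∧ (∀ x : ℝ, 2 ≤ |x| → φ₀ x = 0)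

/-- The Littlewood–Paley projection `Q_{M,N}`:
`(Q_{M,N}f)^(ξ,η) = ψ(M⁻¹ξ)ψ(N⁻¹η) f̂(ξ,η)` with `ψ(x) = φ₀(x) − φ₀(2x)`. -/
noncomputable def QMN (φ₀ : ℝ → ℝ) (M N : ℝ) (f : ℝ × ℝ → ℂ) : ℝ × ℝ → ℂ :=
  ftInv (fun p : ℝ × ℝ =>
    (((φ₀ (M⁻¹ * p.1) - φ₀ (2 * (M⁻¹ * p.1))) *
      (φ₀ (N⁻¹ * p.2) - φ₀ (2 * (N⁻¹ * p.2))) : ℝ) : ℂ) * ft f p)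

/-- The anisotropic derivative `|∂ₓ|^{s/2}|∂_y|^{s/2}`, the Fourier multiplier with
symbol `|ξ|^{s/2}|η|^{s/2}`; `‖f‖_{Ḣ_h^s} = ‖|∂ₓ|^{s/2}|∂_y|^{s/2} f‖_{L²}`. -/
noncomputable def anisoDeriv (s : ℝ) (f : ℝ × ℝ → ℂ) : ℝ × ℝ → ℂ :=
  ftInv (fun p : ℝ × ℝ => ((|p.1| ^ (s/2) * |p.2| ^ (s/2) : ℝ) : ℂ) * ft f p)

/-! ### One-dimensional inverse Fourier integrals and Plancherel -/

/-- The one-dimensional inverse Fourier integral `x ↦ ∫ e^{2πixξ} g(ξ) dξ`. -/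
noncomputable def inv1 (g : ℝ → ℂ) (x : ℝ) : ℂ :=
  ∫ ξ : ℝ, Complex.exp (2 * Real.pi * (x * ξ) * Complex.I) * g ξ

lemma norm_char (t : ℂ) (s : ℝ) (h : t = s) : ‖Complex.exp (2 * Real.pi * t * Complex.I)‖ = 1 := by
  subst h
  have : (2 * Real.pi * (s : ℂ) * Complex.I) = ((2 * Real.pi * s : ℝ) : ℂ) * Complex.I := by
    push_cast; ring
  rw [this, Complex.norm_exp_ofReal_mul_I]

lemma norm_char_mul (x ξ : ℝ) : ‖Complex.exp (2 * Real.pi * ((x : ℂ) * ξ) * Complex.I)‖ = 1 :=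
  norm_char _ (x * ξ) (by push_cast; ring)

lemma inv1_eq_fourierInv (g : ℝ → ℂ) (x : ℝ) : inv1 g x = FourierTransformInv.fourierInv g x := by
  rw [Real.fourierInv_eq']
  unfold inv1
  congr 1
  ext ξ
  simp only [smul_eq_mul]
  congr 2
  simp

open FourierTransform SchwartzMap in
/-- For `g ∈ L¹ ∩ L²` the Fourier integral agrees a.e. with the `L²` Fourier transform: both pair
in the same way with test functions. -/
lemma fourierInv_ae_eq_Lp (g : ℝ → ℂ) (h1 : Integrable g) (h2 : MemLp g 2) :
    (fun x => FourierTransformInv.fourierInv g x) =ᵐ[volume]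
      ((𝓕⁻ (h2.toLp g) : Lp ℂ 2 (volume : Measure ℝ)) : ℝ → ℂ) := by
  have hcont : Continuous (fun x => FourierTransformInv.fourierInv g x) := by
    refine VectorFourier.fourierIntegral_continuous Real.continuous_fourierChar ?_ h1
    simp only [LinearMap.neg_apply, innerₗ_apply_apply]
    fun_prop
  refine ae_eq_of_integral_contDiff_smul_eq hcont.locallyIntegrable
    ((Lp.memLp _).locallyIntegrable (by norm_num)) ?_
  intro φ hφ hφc
  have hg₁ : HasCompactSupport (Complex.ofRealCLM ∘ φ) := hφc.comp_left rfl
  have hg₂ : ContDiff ℝ (⊤ : ℕ∞) (Complex.ofRealCLM ∘ φ) := by fun_prop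
  set Φ : 𝓢(ℝ, ℂ) := hg₁.toSchwartzMap hg₂ with hΦ
  have e1 := DFunLike.congr_fun (Lp.fourierInv_toTemperedDistribution_eq (h2.toLp g)) Φ
  rw [TemperedDistribution.fourierInv_apply, Lp.toTemperedDistribution_apply,
    Lp.toTemperedDistribution_apply] at e1
  have e2 : ∫ x, φ x • (𝓕⁻ (h2.toLp g) : Lp ℂ 2 (volume : Measure ℝ)) x
      = ∫ x, Φ x • (𝓕⁻ (h2.toLp g) : Lp ℂ 2 (volume : Measure ℝ)) x := by
    congr 1
  rw [e2, ← e1]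
  have e3 : ∫ x, (𝓕⁻ Φ) x • (h2.toLp g) x = ∫ x, (𝓕⁻ Φ) x • g x := by
    apply integral_congr_ae
    filter_upwards [h2.coeFn_toLp] with x hx
    rw [hx]
  rw [e3]
  have e4 := VectorFourier.integral_fourierIntegral_smul_eq_flip (μ := (volume : Measure ℝ))
    (ν := (volume : Measure ℝ)) (L := -innerₗ ℝ) (f := (Φ : ℝ → ℂ)) (g := g)
    Real.continuous_fourierChar (by simp only [LinearMap.neg_apply, innerₗ_apply_apply]; fun_prop)
    Φ.integrable h1
  have e5 : (-innerₗ ℝ : ℝ →ₗ[ℝ] ℝ →ₗ[ℝ] ℝ).flip = -innerₗ ℝ := by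
    ext; simp
  rw [e5] at e4
  rw [SchwartzMap.fourierInv_coe]
  refine Eq.trans ?_ e4.symm
  congr 1

/-- Plancherel's identity for Fourier integrals of functions in `L¹ ∩ L²`. -/
lemma plancherel_inv1 (g : ℝ → ℂ) (h1 : Integrable g) (h2 : MemLp g 2) :
    ∫⁻ x, ‖inv1 g x‖ₑ ^ 2 = ∫⁻ ξ, ‖g ξ‖ₑ ^ 2 := by
  have a1 := fourierInv_ae_eq_Lp g h1 h2
  have a2 : eLpNorm (inv1 g) 2 volume = eLpNorm g 2 volume := by
    have : inv1 g = fun x => FourierTransformInv.fourierInv g x := by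
      ext x; exact inv1_eq_fourierInv g x
    rw [this, eLpNorm_congr_ae a1, ← Lp.enorm_def, ← eLpNorm_congr_ae h2.coeFn_toLp,
      ← Lp.enorm_def]
    have : ‖(FourierTransformInv.fourierInv (h2.toLp g) : Lp ℂ 2 (volume : Measure ℝ))‖
        = ‖h2.toLp g‖ := by
      rw [← Lp.norm_fourier_eq, FourierTransform.fourier_fourierInv_eq]
    rw [← ofReal_norm, ← ofReal_norm, this]
  have a3 := congrArg (fun t => t ^ 2) a2
  have key : ∀ h : ℝ → ℂ, eLpNorm h 2 volume ^ 2 = ∫⁻ x, ‖h x‖ₑ ^ 2 := by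
    intro h
    have := eLpNorm_nnreal_pow_eq_lintegral (f := h) (p := 2) (μ := volume) (by norm_num)
    simpa using this
  simpa only [key] using a3

/-! ### The Fourier transform of test functions on the plane -/

/-- The decay weight `(1 + ξ²)⁻¹`. -/
noncomputable def wt (ξ : ℝ) : ℝ := (1 + ξ ^ 2)⁻¹

lemma wt_pos (ξ : ℝ) : 0 < wt ξ := by unfold wt; positivity

lemma wt_le_one (ξ : ℝ) : wt ξ ≤ 1 := by
  unfold wt
  exact inv_le_one_of_one_le₀ (by nlinarith [sq_nonneg ξ])

lemma wt_cont : Continuous wt := by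
  unfold wt
  exact Continuous.inv₀ (by fun_prop) (fun x => by positivity)

lemma wt_integrable : Integrable wt := by
  exact integrable_inv_one_add_sq

/-- The function `f` moved to the Euclidean plane `WithLp 2 (ℝ × ℝ)`, as a Schwartz function. -/
noncomputable def toS (f : ℝ × ℝ → ℂ) (hf : ContDiff ℝ (⊤ : ℕ∞) f) (hc : HasCompactSupport f) :
    SchwartzMap (WithLp 2 (ℝ × ℝ)) ℂ :=
  HasCompactSupport.toSchwartzMap (f := fun z : WithLp 2 (ℝ × ℝ) => f (WithLp.ofLp z))
    (hc.comp_homeomorph (WithLp.prodContinuousLinearEquiv 2 ℝ ℝ ℝ).toHomeomorph)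
    (hf.comp (WithLp.prodContinuousLinearEquiv 2 ℝ ℝ ℝ).contDiff)

lemma integral_withLp (h : WithLp 2 (ℝ × ℝ) → ℂ) :
    ∫ z, h z = ∫ p : ℝ × ℝ, h (WithLp.toLp 2 p) :=
  ((WithLp.volume_preserving_symm_measurableEquiv_toLp_prod ℝ ℝ).symm.integral_comp
    (MeasurableEquiv.measurableEmbedding _) h).symm

lemma fourier_withLp (h : WithLp 2 (ℝ × ℝ) → ℂ) (p : ℝ × ℝ) :
    FourierTransform.fourier h (WithLp.toLp 2 p) = ft (fun q => h (WithLp.toLp 2 q)) p := by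
  rw [Real.fourier_eq', integral_withLp]
  unfold ft
  congr 1
  ext q
  simp only [smul_eq_mul, WithLp.prod_inner_apply]
  congr 2
  simp
  ring

lemma fourierInv_withLp (h : WithLp 2 (ℝ × ℝ) → ℂ) (p : ℝ × ℝ) :
    FourierTransformInv.fourierInv h (WithLp.toLp 2 p)
      = ftInv (fun q => h (WithLp.toLp 2 q)) p := by
  rw [Real.fourierInv_eq', integral_withLp]
  unfold ftInv
  congr 1
  ext q
  simp only [smul_eq_mul, WithLp.prod_inner_apply]
  congr 2
  simp

lemma ft_eq_schwartz (f : ℝ × ℝ → ℂ) (hf : ContDiff ℝ (⊤ : ℕ∞) f) (hc : HasCompactSupport f)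
    (p : ℝ × ℝ) :
    ft f p = (FourierTransform.fourier (toS f hf hc)) (WithLp.toLp 2 p) := by
  rw [SchwartzMap.fourier_coe, fourier_withLp]
  rfl

lemma ft_continuous (f : ℝ × ℝ → ℂ) (hf : ContDiff ℝ (⊤ : ℕ∞) f) (hc : HasCompactSupport f) :
    Continuous (ft f) := by
  have : ft f = fun p => (FourierTransform.fourier (toS f hf hc)) (WithLp.toLp 2 p) := by
    ext p; exact ft_eq_schwartz f hf hc p
  rw [this]
  exact (SchwartzMap.continuous _).comp (WithLp.prod_continuous_toLp 2 ℝ ℝ)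

lemma ftInv_ft (f : ℝ × ℝ → ℂ) (hf : ContDiff ℝ (⊤ : ℕ∞) f) (hc : HasCompactSupport f) :
    ftInv (ft f) = f := by
  ext p
  have h1 : FourierTransformInv.fourierInv (FourierTransform.fourier (toS f hf hc)) = toS f hf hc :=
    FourierTransform.fourierInv_fourier_eq _
  have h2 := DFunLike.congr_fun h1 (WithLp.toLp 2 p)
  rw [SchwartzMap.fourierInv_coe, fourierInv_withLp] at h2
  rw [show ft f = fun q => (FourierTransform.fourier (toS f hf hc)) (WithLp.toLp 2 q) from
    funext (ft_eq_schwartz f hf hc), h2]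
  rfl

/-- Fourier transforms of test functions are Schwartz; the eighth power of the norm dominates the
product weight. -/
lemma ft_decay (f : ℝ × ℝ → ℂ) (hf : ContDiff ℝ (⊤ : ℕ∞) f) (hc : HasCompactSupport f) :
    ∃ D : ℝ, 0 ≤ D ∧ ∀ ξ η : ℝ, ‖ft f (ξ, η)‖ ≤ D * (wt ξ ^ 2 * wt η ^ 2) := by
  set S := FourierTransform.fourier (toS f hf hc) with hS
  refine ⟨2 ^ 8 * ((Finset.Iic (8, 0)).sup fun m => SchwartzMap.seminorm ℝ m.1 m.2) S,
    by positivity, fun ξ η => ?_⟩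
  have h := SchwartzMap.one_add_le_sup_seminorm_apply (𝕜 := ℝ) (m := (8, 0)) (k := 8) (n := 0)
    le_rfl le_rfl S (WithLp.toLp 2 (ξ, η))
  rw [norm_iteratedFDeriv_zero, ← ft_eq_schwartz f hf hc] at h
  set z : WithLp 2 (ℝ × ℝ) := WithLp.toLp 2 (ξ, η) with hz
  have hn : ‖z‖ ^ 2 = ξ ^ 2 + η ^ 2 := by
    rw [WithLp.prod_norm_sq_eq_of_L2]; simp [hz]
  have hz0 : 0 ≤ ‖z‖ := norm_nonneg _
  have b1 : 1 + ξ ^ 2 ≤ (1 + ‖z‖) ^ 2 := by nlinarith [sq_nonneg η]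
  have b2 : 1 + η ^ 2 ≤ (1 + ‖z‖) ^ 2 := by nlinarith [sq_nonneg ξ]
  have b3 : (1 + ξ ^ 2) ^ 2 * (1 + η ^ 2) ^ 2 ≤ (1 + ‖z‖) ^ 8 := by
    calc (1 + ξ ^ 2) ^ 2 * (1 + η ^ 2) ^ 2 ≤ ((1 + ‖z‖) ^ 2) ^ 2 * ((1 + ‖z‖) ^ 2) ^ 2 := by
          gcongr
      _ = _ := by ring
  have b4 : wt ξ ^ 2 * wt η ^ 2 = ((1 + ξ ^ 2) ^ 2 * (1 + η ^ 2) ^ 2)⁻¹ := by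
    unfold wt; rw [mul_inv, inv_pow, inv_pow]
  rw [b4, ← div_eq_mul_inv, le_div_iff₀ (by positivity)]
  calc ‖ft f (ξ, η)‖ * ((1 + ξ ^ 2) ^ 2 * (1 + η ^ 2) ^ 2)
      ≤ ‖ft f (ξ, η)‖ * (1 + ‖z‖) ^ 8 := by gcongr
    _ ≤ _ := by rw [mul_comm]; exact h

/-! ### The dyadic-threshold inequality and dyadic sums -/

/-- The ratio `2^{1/3}` by which the dyadic bounds grow. -/
noncomputable def rho : ℝ := (2 : ℝ) ^ (1 / 3 : ℝ)

lemma rho_pos : 0 < rho := by unfold rho; positivity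

lemma rho_cube : rho ^ 3 = 2 := by
  unfold rho
  rw [← Real.rpow_natCast, ← Real.rpow_mul (by norm_num)]
  norm_num

lemma one_lt_rho : 1 < rho := by
  unfold rho
  exact Real.one_lt_rpow (by norm_num) (by norm_num)

lemma rho_le_two : rho ≤ 2 := by
  have := rho_cube
  nlinarith [one_lt_rho, sq_nonneg (rho - 1)]

lemma rho_sq_le_two : rho ^ 2 ≤ 2 := by
  have := rho_cube
  nlinarith [one_lt_rho, sq_nonneg (rho - 1), sq_nonneg rho]

lemma zpow_rpow_third (k : ℤ) : ((2 : ℝ) ^ k) ^ (1 / 3 : ℝ) = rho ^ k := by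
  unfold rho
  rw [← Real.rpow_intCast, ← Real.rpow_intCast, ← Real.rpow_mul (by norm_num),
    ← Real.rpow_mul (by norm_num), mul_comm]

/-- `2^{k/3}` as an extended nonnegative real. -/
noncomputable def R (k : ℤ) : ℝ≥0∞ := ENNReal.ofReal (rho ^ k)

lemma R_add (k l : ℤ) : R (k + l) = R k * R l := by
  unfold R
  rw [zpow_add₀ rho_pos.ne', ENNReal.ofReal_mul (zpow_pos rho_pos _).le]

lemma R_zero : R 0 = 1 := by simp [R]

lemma R_ne_zero (k : ℤ) : R k ≠ 0 := by
  unfold R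
  rw [Ne, ENNReal.ofReal_eq_zero, not_le]
  exact zpow_pos rho_pos _

lemma R_ne_top (k : ℤ) : R k ≠ ⊤ := ENNReal.ofReal_ne_top

lemma R_neg_mul (k : ℤ) : R (-k) * R k = 1 := by
  rw [← R_add]; simp [R_zero]

/-- The weight `|ξ|^{2/3}`. -/
noncomputable def wS (ξ : ℝ) : ℝ≥0∞ := ENNReal.ofReal (|ξ| ^ (2 / 3 : ℝ))

lemma wS_meas : Measurable wS := by
  unfold wS
  fun_prop

/-- Real-variable core of the refined inequality. If a quantity `a` splits, for every dyadic
threshold `k`, into a part of size at most `2^{k/3} b` and a part `t k` with `2^{2k/3} t k ≤ S`,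
then choosing `k` so that the first part is about `a / 2` gives `a³ ≲ b² S`. -/
lemma cubic_bound_real (a b S : ℝ) (t : ℤ → ℝ) (ha : 0 ≤ a) (hb : 0 ≤ b)
    (ht : ∀ k, 0 ≤ t k)
    (h1 : ∀ k : ℤ, a ≤ rho ^ k * b + t k) (h2 : ∀ k : ℤ, rho ^ (2 * k) * t k ≤ S) :
    a ^ 3 ≤ 16 * b ^ 2 * S := by
  have hS : 0 ≤ S := le_trans (by have := ht 0; simpa using this) (h2 0)
  rcases ha.eq_or_lt with rfl | ha'
  · simp; positivity
  rcases hb.eq_or_lt with rfl | hb'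
  · -- when `b = 0` every `t k` dominates `a`, which contradicts `t k → 0` as `k → ∞`
    exfalso
    obtain ⟨n, hn⟩ := pow_unbounded_of_one_lt (S / a) one_lt_rho
    have h3 := h1 n
    have h4 := h2 n
    simp only [mul_zero, zero_add] at h3
    rw [div_lt_iff₀ ha'] at hn
    have h5 : rho ^ n ≤ rho ^ (2 * (n : ℤ)) := by
      rw [← zpow_natCast]
      exact zpow_le_zpow_right₀ one_lt_rho.le (by omega)
    have h6 : rho ^ n * a ≤ rho ^ (2 * (n : ℤ)) * t n := by
      have := zpow_pos rho_pos (2 * (n : ℤ))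
      gcongr
    linarith
  · obtain ⟨k, hk1, hk2⟩ := exists_mem_Ico_zpow (x := a / (2 * b)) (y := rho)
      (by positivity) one_lt_rho
    rw [le_div_iff₀ (by positivity)] at hk1
    rw [div_lt_iff₀ (by positivity)] at hk2
    have h3 := h1 k
    have h4 : a / 2 ≤ t k := by linarith
    have hρ := zpow_pos rho_pos k
    have h5 : a ≤ rho ^ k * (2 * rho * b) := by
      rw [zpow_add_one₀ rho_pos.ne'] at hk2
      linarith
    have h6 : rho ^ (2 * k) = rho ^ k * rho ^ k := by rw [two_mul, zpow_add₀ rho_pos.ne']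
    have hr := rho_pos
    calc a ^ 3 = a ^ 2 * a := by ring
      _ ≤ (rho ^ k * (2 * rho * b)) ^ 2 * (2 * t k) := by gcongr; linarith
      _ = 8 * rho ^ 2 * b ^ 2 * (rho ^ (2 * k) * t k) := by rw [h6]; ring
      _ ≤ 8 * rho ^ 2 * b ^ 2 * S := by gcongr; exact h2 k
      _ ≤ 8 * 2 * b ^ 2 * S := by gcongr; exact rho_sq_le_two
      _ = _ := by ring

lemma cubic_bound (a b S : ℝ≥0∞) (t : ℤ → ℝ≥0∞) (hb : b ≠ ⊤) (hS : S ≠ ⊤)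
    (h1 : ∀ k : ℤ, a ≤ R k * b + t k) (h2 : ∀ k : ℤ, R (2 * k) * t k ≤ S) :
    a ^ 3 ≤ 16 * b ^ 2 * S := by
  have ht : ∀ k, t k ≠ ⊤ := by
    intro k hk
    have := h2 k
    rw [hk, ENNReal.mul_top (R_ne_zero _)] at this
    exact hS (top_le_iff.1 this)
  have ha : a ≠ ⊤ := ne_top_of_le_ne_top
    (ENNReal.add_ne_top.2 ⟨ENNReal.mul_ne_top (R_ne_top 0) hb, ht 0⟩) (h1 0)
  have key := cubic_bound_real a.toReal b.toReal S.toReal (fun k => (t k).toReal)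
    ENNReal.toReal_nonneg ENNReal.toReal_nonneg (fun _ => ENNReal.toReal_nonneg)
    (fun k => ?_) (fun k => ?_)
  · rw [← ENNReal.toReal_le_toReal (by finiteness) (by finiteness)]
    simpa using key
  · have := ENNReal.toReal_mono
      (ENNReal.add_ne_top.2 ⟨ENNReal.mul_ne_top (R_ne_top k) hb, ht k⟩) (h1 k)
    rw [ENNReal.toReal_add (ENNReal.mul_ne_top (R_ne_top k) hb) (ht k)] at this
    simpa [R, (zpow_pos rho_pos k).le] using this
  · have := ENNReal.toReal_mono hS (h2 k)
    simpa [R, (zpow_pos rho_pos (2 * k)).le] using this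

/-- The geometric sum `∑_{2^k ≤ |ξ|} 2^{2k/3}` is at most a constant times `|ξ|^{2/3}`. -/
lemma dyadic_sum (ξ : ℝ) :
    ∑' k : ℤ, (if (2 : ℝ) ^ k ≤ |ξ| then R (2 * k) else 0)
      ≤ ENNReal.ofReal ((1 - (rho ^ 2)⁻¹)⁻¹) * wS ξ := by
  rcases eq_or_ne ξ 0 with rfl | hξ
  · have : ∀ k : ℤ, ¬ ((2 : ℝ) ^ k ≤ 0) := by
      intro k; rw [not_le]; positivity
    simp [this]
  obtain ⟨n, hn1, hn2⟩ := exists_mem_Ico_zpow (x := |ξ|) (y := (2 : ℝ))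
    (abs_pos.2 hξ) (by norm_num)
  have hq0 : 0 < (rho ^ 2)⁻¹ := by have := rho_pos; positivity
  have hq : (rho ^ 2)⁻¹ < 1 := by
    apply inv_lt_one_of_one_lt₀
    nlinarith [one_lt_rho]
  have hinj : Function.Injective (fun i : ℕ => n - (i : ℤ)) := by
    intro i j h
    simp only at h
    omega
  have hsupp : Function.support (fun k : ℤ => (if (2 : ℝ) ^ k ≤ |ξ| then R (2 * k) else 0))
      ⊆ Set.range (fun i : ℕ => n - (i : ℤ)) := by
    intro k hk
    simp only [Function.mem_support, ne_eq, ite_eq_right_iff, Classical.not_imp] at hk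
    have h1 : (2 : ℝ) ^ k < 2 ^ (n + 1) := lt_of_le_of_lt hk.1 hn2
    have h2 : k < n + 1 := (zpow_lt_zpow_iff_right₀ (by norm_num)).1 h1
    exact ⟨(n - k).toNat, by simp only; omega⟩
  rw [← hinj.tsum_eq hsupp]
  have hterm : ∀ i : ℕ, (if (2 : ℝ) ^ (n - (i : ℤ)) ≤ |ξ| then R (2 * (n - (i : ℤ))) else 0)
      ≤ ENNReal.ofReal (rho ^ (2 * n) * ((rho ^ 2)⁻¹) ^ i) := by
    intro i
    split_ifs
    · apply le_of_eq
      unfold R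
      congr 1
      rw [mul_sub, zpow_sub₀ rho_pos.ne', div_eq_mul_inv, zpow_mul rho 2 (i : ℤ), zpow_natCast,
        inv_pow]
      norm_cast
    · simp
  calc _ ≤ ∑' i : ℕ, ENNReal.ofReal (rho ^ (2 * n) * ((rho ^ 2)⁻¹) ^ i) :=
        ENNReal.tsum_le_tsum hterm
    _ = ENNReal.ofReal (∑' i : ℕ, rho ^ (2 * n) * ((rho ^ 2)⁻¹) ^ i) := by
        rw [ENNReal.ofReal_tsum_of_nonneg]
        · intro i
          have := zpow_pos rho_pos (2 * n)
          positivity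
        · exact (summable_geometric_of_lt_one hq0.le hq).mul_left _
    _ = ENNReal.ofReal ((1 - (rho ^ 2)⁻¹)⁻¹) * ENNReal.ofReal (rho ^ (2 * n)) := by
        rw [tsum_mul_left, tsum_geometric_of_lt_one hq0.le hq, mul_comm,
          ENNReal.ofReal_mul]
        rw [inv_nonneg]; linarith
    _ ≤ _ := by
        unfold wS
        gcongr
        have : rho ^ (2 * n) = ((2 : ℝ) ^ n) ^ (2 / 3 : ℝ) := by
          rw [show (2 / 3 : ℝ) = 1 / 3 * (2 : ℕ) by norm_num, Real.rpow_mul (by positivity),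
            Real.rpow_natCast, zpow_rpow_third, mul_comm, zpow_mul]
          norm_cast
        rw [this]
        gcongr

/-- Near the origin the reciprocal weight satisfies `∫_{|ξ| ≤ L} |ξ|^{-2/3} dξ = 6 L^{1/3}`. -/
lemma lintegral_rpow_ball (L : ℝ) (hL : 0 < L) :
    ∫⁻ t : ℝ, (if |t| ≤ L then ENNReal.ofReal (|t| ^ (-2 / 3 : ℝ)) else 0)
      ≤ ENNReal.ofReal (6 * L ^ (1 / 3 : ℝ)) := by
  set h : ℝ → ℝ≥0∞ := fun t => if |t| ≤ L then ENNReal.ofReal (|t| ^ (-2 / 3 : ℝ)) else 0 with hh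
  have hpos : ∫⁻ t in Set.Ioi (0 : ℝ), h t ≤ ENNReal.ofReal (3 * L ^ (1 / 3 : ℝ)) := by
    have hint : IntervalIntegrable (fun t : ℝ => t ^ (-2 / 3 : ℝ)) volume 0 L :=
      intervalIntegral.intervalIntegrable_rpow' (by norm_num)
    have hval : ∫ t in Set.Ioc 0 L, t ^ (-2 / 3 : ℝ) = 3 * L ^ (1 / 3 : ℝ) := by
      rw [← intervalIntegral.integral_of_le hL.le, integral_rpow (Or.inl (by norm_num))]
      rw [show (-2 / 3 + 1 : ℝ) = 1 / 3 by norm_num, Real.zero_rpow (by norm_num)]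
      ring
    rw [← hval, ofReal_integral_eq_lintegral_ofReal
      ((intervalIntegrable_iff_integrableOn_Ioc_of_le hL.le).1 hint)]
    · rw [← lintegral_indicator measurableSet_Ioi, ← lintegral_indicator measurableSet_Ioc]
      apply lintegral_mono
      intro t
      by_cases ht : 0 < t
      · by_cases htL : t ≤ L
        · simp [hh, Set.indicator, ht, htL, abs_of_pos ht]
        · simp [hh, Set.indicator, ht, htL, abs_of_pos ht]
      · simp [Set.indicator, ht]
    · filter_upwards [ae_restrict_mem measurableSet_Ioc] with t ht
      have := ht.1
      simp only [Pi.zero_apply]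
      positivity
  have hneg : ∫⁻ t in Set.Iio (0 : ℝ), h t = ∫⁻ t in Set.Ioi (0 : ℝ), h t := by
    have := (Measure.measurePreserving_neg (volume : Measure ℝ)).setLIntegral_comp_preimage_emb
      (MeasurableEquiv.neg ℝ).measurableEmbedding h (Set.Ioi (0 : ℝ))
    rw [← this]
    simp [hh]
  have hsplit : ∫⁻ t : ℝ, h t = (∫⁻ t in Set.Iio (0 : ℝ), h t) + ∫⁻ t in Set.Ioi (0 : ℝ), h t := by
    rw [← lintegral_add_compl h (measurableSet_Iio (a := (0 : ℝ))), Set.compl_Iio,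
      setLIntegral_congr Ioi_ae_eq_Ici.symm]
  rw [hsplit, hneg]
  calc _ ≤ ENNReal.ofReal (3 * L ^ (1 / 3 : ℝ)) + ENNReal.ofReal (3 * L ^ (1 / 3 : ℝ)) :=
        add_le_add hpos hpos
    _ = _ := by
        rw [← ENNReal.ofReal_add (by positivity) (by positivity)]
        congr 1; ring

/-! ### Fourier multipliers and Bernstein's inequality -/

/-- Multiplication of `G` by a real Fourier multiplier `m`. -/
noncomputable def mg (m : ℝ → ℝ) (G : ℝ → ℂ) : ℝ → ℂ := fun ξ => (m ξ : ℂ) * G ξ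

/-- The low-pass multiplier `φ₀(2^{-k} ξ)`. -/
noncomputable def chi (φ : ℝ → ℝ) (k : ℤ) : ℝ → ℝ := fun ξ => φ (((2 : ℝ) ^ k)⁻¹ * ξ)

/-- The Littlewood–Paley multiplier `ψ(2^{-k} ξ)`. -/
noncomputable def psi (φ : ℝ → ℝ) (k : ℤ) : ℝ → ℝ :=
  fun ξ => φ (((2 : ℝ) ^ k)⁻¹ * ξ) - φ (2 * (((2 : ℝ) ^ k)⁻¹ * ξ))

/-- The high-pass multiplier `1 - φ₀(2^{-k} ξ)`. -/
noncomputable def oc (φ : ℝ → ℝ) (k : ℤ) : ℝ → ℝ := fun ξ => 1 - chi φ k ξ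

/-- Measurable functions decaying like `(1 + η²)⁻²`. The decay survives a multiplier of growth
`1 + ξ²` with an integrable and square-integrable result. -/
structure Nice (G : ℝ → ℂ) : Prop where
  meas : Measurable G
  bound : ∃ D : ℝ, 0 ≤ D ∧ ∀ η, ‖G η‖ ≤ D * wt η ^ 2

/-- Measurable multipliers growing at most like `1 + ξ²`. -/
structure Mult (m : ℝ → ℝ) : Prop where
  meas : Measurable m
  bound : ∃ K : ℝ, 0 ≤ K ∧ ∀ ξ, |m ξ| * wt ξ ≤ K

/-- The one-dimensional homogeneous Sobolev energy `∫ |ξ|^{2/3} |G(ξ)|² dξ` on the Fourier side. -/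
noncomputable def En (G : ℝ → ℂ) : ℝ≥0∞ := ∫⁻ ξ, wS ξ * ‖G ξ‖ₑ ^ 2

lemma Mult.of_bdd {m : ℝ → ℝ} (hm : Measurable m) {K : ℝ} (hK : ∀ ξ, |m ξ| ≤ K) : Mult m := by
  refine ⟨hm, K, (abs_nonneg _).trans (hK 0), fun ξ => ?_⟩
  calc |m ξ| * wt ξ ≤ |m ξ| * 1 := by
        have := wt_le_one ξ
        gcongr
    _ ≤ K := by rw [mul_one]; exact hK ξ

lemma Mult.one : Mult (fun _ => 1) := Mult.of_bdd measurable_const (K := 1) (by simp)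

lemma mg_norm_le {m : ℝ → ℝ} {G : ℝ → ℂ} {K D : ℝ} (hK : ∀ ξ, |m ξ| * wt ξ ≤ K)
    (hD0 : 0 ≤ D) (hD : ∀ η, ‖G η‖ ≤ D * wt η ^ 2) (ξ : ℝ) : ‖mg m G ξ‖ ≤ K * D * wt ξ := by
  have hw := wt_pos ξ
  unfold mg
  rw [norm_mul, Complex.norm_real, Real.norm_eq_abs]
  calc |m ξ| * ‖G ξ‖ ≤ |m ξ| * (D * wt ξ ^ 2) := by gcongr; exact hD ξ
    _ = (|m ξ| * wt ξ) * (D * wt ξ) := by ring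
    _ ≤ K * (D * wt ξ) := by gcongr; exact hK ξ
    _ = _ := by ring

lemma mg_meas {m : ℝ → ℝ} {G : ℝ → ℂ} (hm : Measurable m) (hG : Measurable G) :
    Measurable (mg m G) := by
  unfold mg
  fun_prop

lemma mg_integrable {m : ℝ → ℝ} {G : ℝ → ℂ} (hm : Mult m) (hG : Nice G) :
    Integrable (mg m G) := by
  obtain ⟨K, hK0, hK⟩ := hm.bound
  obtain ⟨D, hD0, hD⟩ := hG.bound
  exact (wt_integrable.const_mul (K * D)).mono' (mg_meas hm.meas hG.meas).aestronglyMeasurable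
    (Eventually.of_forall (mg_norm_le hK hD0 hD))

lemma mg_memLp {m : ℝ → ℝ} {G : ℝ → ℂ} (hm : Mult m) (hG : Nice G) : MemLp (mg m G) 2 := by
  obtain ⟨K, hK0, hK⟩ := hm.bound
  obtain ⟨D, hD0, hD⟩ := hG.bound
  rw [memLp_two_iff_integrable_sq_norm (mg_meas hm.meas hG.meas).aestronglyMeasurable]
  refine (wt_integrable.const_mul ((K * D) ^ 2)).mono'
    ((mg_meas hm.meas hG.meas).norm.pow_const 2).aestronglyMeasurable
    (Eventually.of_forall fun ξ => ?_)
  have h := mg_norm_le hK hD0 hD ξ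
  have hw := wt_pos ξ
  have hw1 := wt_le_one ξ
  rw [Real.norm_eq_abs, abs_of_nonneg (by positivity)]
  calc ‖mg m G ξ‖ ^ 2 ≤ (K * D * wt ξ) ^ 2 := by gcongr
    _ = (K * D) ^ 2 * (wt ξ * wt ξ) := by ring
    _ ≤ (K * D) ^ 2 * (wt ξ * 1) := by gcongr
    _ = _ := by ring

lemma char_integrable {g : ℝ → ℂ} (hg : Integrable g) (x : ℝ) :
    Integrable (fun ξ : ℝ => Complex.exp (2 * Real.pi * (x * ξ) * Complex.I) * g ξ) := by
  refine hg.norm.mono' ?_ (Eventually.of_forall fun ξ => ?_)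
  · exact (Continuous.aestronglyMeasurable (by fun_prop)).mul hg.aestronglyMeasurable
  · rw [norm_mul, norm_char_mul, one_mul]

lemma inv1_add {g h : ℝ → ℂ} (hg : Integrable g) (hh : Integrable h) (x : ℝ) :
    inv1 (fun ξ => g ξ + h ξ) x = inv1 g x + inv1 h x := by
  unfold inv1
  rw [← integral_add (char_integrable hg x) (char_integrable hh x)]
  simp_rw [mul_add]

lemma enorm_inv1_le (g : ℝ → ℂ) (x : ℝ) : ‖inv1 g x‖ₑ ≤ ∫⁻ ξ, ‖g ξ‖ₑ := by
  unfold inv1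
  refine (enorm_integral_le_lintegral_enorm _).trans (le_of_eq ?_)
  congr 1
  ext ξ
  rw [enorm_mul, ← ofReal_norm (Complex.exp _), norm_char_mul]
  simp

lemma inv1_continuous {g : ℝ → ℂ} (hg : Integrable g) : Continuous (inv1 g) := by
  have : inv1 g = fun x => FourierTransformInv.fourierInv g x := by
    ext x; exact inv1_eq_fourierInv g x
  rw [this]
  refine VectorFourier.fourierIntegral_continuous Real.continuous_fourierChar ?_ hg
  simp only [LinearMap.neg_apply, innerₗ_apply_apply]
  fun_prop

lemma enorm_sq_add_le (a b : ℂ) : ‖a + b‖ₑ ^ 2 ≤ 2 * ‖a‖ₑ ^ 2 + 2 * ‖b‖ₑ ^ 2 := by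
  simp only [← ofReal_norm]
  rw [← ENNReal.ofReal_pow (norm_nonneg _), ← ENNReal.ofReal_pow (norm_nonneg _),
    ← ENNReal.ofReal_pow (norm_nonneg _), ← ENNReal.ofReal_ofNat 2,
    ← ENNReal.ofReal_mul (by norm_num), ← ENNReal.ofReal_mul (by norm_num),
    ← ENNReal.ofReal_add (by positivity) (by positivity)]
  apply ENNReal.ofReal_le_ofReal
  have h := norm_add_le a b
  calc ‖a + b‖ ^ 2 ≤ (‖a‖ + ‖b‖) ^ 2 := by gcongr
    _ ≤ _ := by nlinarith [sq_nonneg (‖a‖ - ‖b‖)]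

/-- Squared Cauchy–Schwarz inequality for lower integrals. -/
lemma lintegral_cs {f g : ℝ → ℝ≥0∞} (hf : Measurable f) (hg : Measurable g) :
    (∫⁻ x, f x * g x) ^ 2 ≤ (∫⁻ x, f x ^ 2) * ∫⁻ x, g x ^ 2 := by
  have h := ENNReal.lintegral_mul_le_Lp_mul_Lq (volume : Measure ℝ) Real.HolderConjugate.two_two
    hf.aemeasurable hg.aemeasurable
  simp only [Pi.mul_apply] at h
  calc (∫⁻ x, f x * g x) ^ 2
      ≤ ((∫⁻ a, f a ^ (2 : ℝ)) ^ (1 / 2 : ℝ) * (∫⁻ a, g a ^ (2 : ℝ)) ^ (1 / 2 : ℝ)) ^ 2 := by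
        gcongr
    _ = _ := by
        rw [mul_pow, ← ENNReal.rpow_natCast, ← ENNReal.rpow_natCast, ← ENNReal.rpow_mul,
          ← ENNReal.rpow_mul]
        norm_num

/-- Bernstein's inequality on the Fourier side: a multiplier supported in `|ξ| ≤ 2^{k+1}` maps the
weighted `L²` space to `L^∞` with norm squared `≲ 2^{k/3}`. -/
lemma bernstein_low (m : ℝ → ℝ) (K : ℝ) (hK : ∀ ξ, |m ξ| ≤ K) (k : ℤ)
    (hs : ∀ ξ, 2 * (2 : ℝ) ^ k < |ξ| → m ξ = 0) (G : ℝ → ℂ) (hG : Measurable G) (x : ℝ) :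
    ‖inv1 (mg m G) x‖ₑ ^ 2 ≤ ENNReal.ofReal (12 * K ^ 2) * R k * En G := by
  have hK0 : 0 ≤ K := (abs_nonneg _).trans (hK 0)
  -- Cauchy–Schwarz against the weight `|ξ|^{1/3}`, whose inverse square is integrable near `0`
  set L : ℝ := 2 * (2 : ℝ) ^ k with hL
  have hL0 : 0 < L := by positivity
  set u : ℝ → ℝ≥0∞ := fun t =>
    ENNReal.ofReal K * (if |t| ≤ L then ENNReal.ofReal (|t| ^ (-1 / 3 : ℝ)) else 0) with hu
  set v : ℝ → ℝ≥0∞ := fun t => ENNReal.ofReal (|t| ^ (1 / 3 : ℝ)) * ‖G t‖ₑ with hv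
  have hum : Measurable u := by
    refine Measurable.const_mul (Measurable.ite ?_ (by fun_prop) measurable_const) _
    exact measurableSet_le (by fun_prop) measurable_const
  have hvm : Measurable v := by
    have := hG.enorm
    fun_prop
  have h1 : ∫⁻ ξ, ‖mg m G ξ‖ₑ ≤ ∫⁻ ξ, u ξ * v ξ := by
    apply lintegral_mono_ae
    filter_upwards [Measure.ae_ne volume (0 : ℝ)] with ξ hξ
    have hξ' : 0 < |ξ| := abs_pos.2 hξ
    by_cases h : |ξ| ≤ L
    · simp only [hu, hv, h, if_true, mg]
      rw [enorm_mul]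
      have e1 : ENNReal.ofReal (|ξ| ^ (-1 / 3 : ℝ)) * ENNReal.ofReal (|ξ| ^ (1 / 3 : ℝ)) = 1 := by
        rw [← ENNReal.ofReal_mul (by positivity), ← Real.rpow_add hξ']
        norm_num
      calc ‖(m ξ : ℂ)‖ₑ * ‖G ξ‖ₑ ≤ ENNReal.ofReal K * ‖G ξ‖ₑ := by
            gcongr
            rw [← ofReal_norm, Complex.norm_real, Real.norm_eq_abs]
            exact ENNReal.ofReal_le_ofReal (hK ξ)
        _ = ENNReal.ofReal K * (ENNReal.ofReal (|ξ| ^ (-1 / 3 : ℝ)) *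
              ENNReal.ofReal (|ξ| ^ (1 / 3 : ℝ))) * ‖G ξ‖ₑ := by rw [e1, mul_one]
        _ = _ := by ring
    · simp [mg, hs ξ (not_le.1 h)]
  have h2 : ∫⁻ t, u t ^ 2 ≤ ENNReal.ofReal (12 * K ^ 2) * R k := by
    have e1 : ∀ t, u t ^ 2 = ENNReal.ofReal (K ^ 2) *
        (if |t| ≤ L then ENNReal.ofReal (|t| ^ (-2 / 3 : ℝ)) else 0) := by
      intro t
      simp only [hu]
      rw [mul_pow, ENNReal.ofReal_pow hK0]
      congr 1
      split_ifs
      · rw [← ENNReal.ofReal_pow (by positivity), ← Real.rpow_natCast,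
          ← Real.rpow_mul (abs_nonneg _)]
        norm_num
      · simp
    simp_rw [e1]
    rw [lintegral_const_mul' _ _ ENNReal.ofReal_ne_top]
    calc _ ≤ ENNReal.ofReal (K ^ 2) * ENNReal.ofReal (6 * L ^ (1 / 3 : ℝ)) := by
          gcongr; exact lintegral_rpow_ball L hL0
      _ ≤ _ := by
          unfold R
          rw [← ENNReal.ofReal_mul (by positivity), ← ENNReal.ofReal_mul (by positivity)]
          apply ENNReal.ofReal_le_ofReal
          have e2 : L ^ (1 / 3 : ℝ) = rho * rho ^ k := by
            rw [hL, Real.mul_rpow (by norm_num) (by positivity), zpow_rpow_third]; rfl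
          have := zpow_pos rho_pos k
          rw [e2]
          calc K ^ 2 * (6 * (rho * rho ^ k)) ≤ K ^ 2 * (6 * (2 * rho ^ k)) := by
                gcongr; exact rho_le_two
            _ = _ := by ring
  have h3 : ∫⁻ t, v t ^ 2 = En G := by
    unfold En
    congr 1
    ext t
    simp only [hv, wS]
    rw [mul_pow, ← ENNReal.ofReal_pow (by positivity), ← Real.rpow_natCast,
      ← Real.rpow_mul (abs_nonneg _)]
    norm_num
  calc ‖inv1 (mg m G) x‖ₑ ^ 2 ≤ (∫⁻ ξ, u ξ * v ξ) ^ 2 := by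
        gcongr; exact (enorm_inv1_le _ _).trans h1
    _ ≤ (∫⁻ t, u t ^ 2) * ∫⁻ t, v t ^ 2 := lintegral_cs hum hvm
    _ ≤ _ := by rw [h3]; gcongr

/-- Makes `|ξ|^s` an admissible multiplier and `|ξ|^{2/3}` an admissible energy weight. -/
lemma rpow_le_one_add_sq (s : ℝ) (hs0 : 0 ≤ s) (hs : s ≤ 2) (ξ : ℝ) : |ξ| ^ s ≤ 1 + ξ ^ 2 := by
  rcases le_total |ξ| 1 with h | h
  · have := Real.rpow_le_one (abs_nonneg ξ) h hs0
    nlinarith [sq_nonneg ξ]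
  · calc |ξ| ^ s ≤ |ξ| ^ (2 : ℝ) := Real.rpow_le_rpow_of_exponent_le h hs
      _ = ξ ^ 2 := by rw [Real.rpow_two, sq_abs]
      _ ≤ _ := by linarith

lemma En_ne_top {G : ℝ → ℂ} (hG : Nice G) : En G ≠ ⊤ := by
  obtain ⟨D, hD0, hD⟩ := hG.bound
  have h : En G ≤ ∫⁻ ξ, ENNReal.ofReal (D ^ 2 * wt ξ) := by
    unfold En
    apply lintegral_mono
    intro ξ
    simp only [wS]
    rw [← ofReal_norm, ← ENNReal.ofReal_pow (norm_nonneg _), ← ENNReal.ofReal_mul (by positivity)]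
    apply ENNReal.ofReal_le_ofReal
    have hw := wt_pos ξ
    have hw1 := wt_le_one ξ
    have h1 : |ξ| ^ (2 / 3 : ℝ) * wt ξ ≤ 1 := by
      unfold wt
      rw [← div_eq_mul_inv, div_le_one (by positivity)]
      exact rpow_le_one_add_sq _ (by norm_num) (by norm_num) ξ
    calc |ξ| ^ (2 / 3 : ℝ) * ‖G ξ‖ ^ 2 ≤ |ξ| ^ (2 / 3 : ℝ) * (D * wt ξ ^ 2) ^ 2 := by
          gcongr; exact hD ξ
      _ = D ^ 2 * (|ξ| ^ (2 / 3 : ℝ) * wt ξ) * wt ξ * (wt ξ * wt ξ) := by ring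
      _ ≤ D ^ 2 * 1 * wt ξ * (1 * 1) := by gcongr
      _ = _ := by ring
  exact ne_top_of_le_ne_top (wt_integrable.const_mul (D ^ 2)).lintegral_lt_top.ne h

/-! ### The refined inequality in one dimension -/

/-- A bump function together with an upper bound for its absolute value. -/
structure BumpBd (φ : ℝ → ℝ) (K : ℝ) : Prop where
  bump : IsBump φ
  one_le : 1 ≤ K
  le : ∀ x, |φ x| ≤ K

lemma exists_bumpBd {φ : ℝ → ℝ} (hφ : IsBump φ) : ∃ K, BumpBd φ K := by
  have hc : ContinuousOn φ (Set.Icc (-2) 2) := hφ.1.continuous.continuousOn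
  obtain ⟨K, hK⟩ := isCompact_Icc.exists_bound_of_continuousOn hc
  refine ⟨max 1 K, hφ, le_max_left _ _, fun x => ?_⟩
  by_cases h : 2 ≤ |x|
  · rw [hφ.2.2 x h]; simp
  · exact (hK x (abs_le.1 (not_le.1 h).le)).trans (le_max_right _ _)

section OneDim

variable {φ : ℝ → ℝ} {K : ℝ}

/-- The Littlewood–Paley multipliers telescope. -/
lemma psi_eq (k : ℤ) (ξ : ℝ) : psi φ k ξ = chi φ k ξ - chi φ (k - 1) ξ := by
  unfold psi chi
  have : ((2 : ℝ) ^ (k - 1))⁻¹ = 2 * ((2 : ℝ) ^ k)⁻¹ := by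
    rw [zpow_sub_one₀ (by norm_num)]; simp
  rw [this, mul_assoc]

lemma chi_zero (h : BumpBd φ K) (k : ℤ) (ξ : ℝ) (hξ : 2 * (2 : ℝ) ^ k < |ξ|) : chi φ k ξ = 0 := by
  apply h.bump.2.2
  have h2 : (0 : ℝ) < 2 ^ k := by positivity
  rw [abs_mul, abs_inv, abs_of_pos h2, inv_mul_eq_div, le_div_iff₀ h2]
  exact hξ.le

lemma psi_zero (h : BumpBd φ K) (k : ℤ) (ξ : ℝ) (hξ : 2 * (2 : ℝ) ^ k < |ξ|) : psi φ k ξ = 0 := by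
  rw [psi_eq, chi_zero h k ξ hξ, chi_zero h (k - 1) ξ, sub_zero]
  refine lt_of_le_of_lt ?_ hξ
  gcongr
  · norm_num
  · omega

lemma oc_zero (h : BumpBd φ K) (k : ℤ) (ξ : ℝ) (hξ : |ξ| ≤ (2 : ℝ) ^ k) : oc φ k ξ = 0 := by
  unfold oc chi
  have h2 : (0 : ℝ) < 2 ^ k := by positivity
  rw [h.bump.2.1, sub_self]
  rw [abs_mul, abs_inv, abs_of_pos h2, inv_mul_eq_div, div_le_iff₀ h2, one_mul]
  exact hξ

lemma chi_bd (h : BumpBd φ K) (k : ℤ) (ξ : ℝ) : |chi φ k ξ| ≤ 2 * K := by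
  have := h.le (((2 : ℝ) ^ k)⁻¹ * ξ)
  have := h.one_le
  unfold chi; linarith

lemma psi_bd (h : BumpBd φ K) (k : ℤ) (ξ : ℝ) : |psi φ k ξ| ≤ 2 * K := by
  have h1 := h.le (((2 : ℝ) ^ k)⁻¹ * ξ)
  have h2 := h.le (2 * (((2 : ℝ) ^ k)⁻¹ * ξ))
  unfold psi
  exact (abs_sub _ _).trans (by linarith)

lemma oc_bd (h : BumpBd φ K) (k : ℤ) (ξ : ℝ) : |oc φ k ξ| ≤ 2 * K := by
  have h1 := h.le (((2 : ℝ) ^ k)⁻¹ * ξ)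
  have h2 := h.one_le
  unfold oc chi
  exact (abs_sub _ _).trans (by rw [abs_one]; linarith)

lemma chi_meas (h : BumpBd φ K) (k : ℤ) : Measurable (chi φ k) := by
  have := h.bump.1.continuous.measurable
  unfold chi; fun_prop

lemma chi_mult (h : BumpBd φ K) (k : ℤ) : Mult (chi φ k) := .of_bdd (chi_meas h k) (chi_bd h k)

lemma psi_mult (h : BumpBd φ K) (k : ℤ) : Mult (psi φ k) := by
  refine .of_bdd ?_ (psi_bd h k)
  have := h.bump.1.continuous.measurable
  unfold psi; fun_prop

lemma oc_mult (h : BumpBd φ K) (k : ℤ) : Mult (oc φ k) := by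
  refine .of_bdd ?_ (oc_bd h k)
  have := chi_meas h k
  unfold oc; fun_prop

/-- The constant in Bernstein's inequality. -/
noncomputable def cB (K : ℝ) : ℝ≥0∞ := ENNReal.ofReal (12 * (2 * K) ^ 2)

lemma chi_bern (h : BumpBd φ K) (k : ℤ) (G : ℝ → ℂ) (hG : Measurable G) (x : ℝ) :
    ‖inv1 (mg (chi φ k) G) x‖ₑ ^ 2 ≤ cB K * R k * En G :=
  bernstein_low _ _ (chi_bd h k) k (chi_zero h k) G hG x

lemma psi_bern (h : BumpBd φ K) (k : ℤ) (G : ℝ → ℂ) (hG : Measurable G) (x : ℝ) :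
    ‖inv1 (mg (psi φ k) G) x‖ₑ ^ 2 ≤ cB K * R k * En G :=
  bernstein_low _ _ (psi_bd h k) k (psi_zero h k) G hG x

/-- `2^{1/6}`. -/
noncomputable def rr : ℝ := √rho

lemma rr_sq : rr ^ 2 = rho := Real.sq_sqrt rho_pos.le

lemma one_lt_rr : 1 < rr := by
  unfold rr
  rw [Real.lt_sqrt (by norm_num)]
  simpa using one_lt_rho

lemma rr_zpow_sq (k : ℤ) : (rr ^ k) ^ 2 = rho ^ k := by
  rw [← rr_sq, ← zpow_natCast, ← zpow_natCast, ← zpow_mul, ← zpow_mul, mul_comm]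

/-- Summing a geometric recursion: a family of size `O(r^k)` with `A k ≤ r^k β + A (k-1)` satisfies
`A k ≤ r^k β / (1 - 1/r)`. -/
lemma geom_rec (A : ℤ → ℝ) (β c0 : ℝ) (hA : ∀ k, A k ≤ rr ^ k * c0)
    (hrec : ∀ k, A k ≤ rr ^ k * β + A (k - 1)) (hβ : 0 ≤ β) (k : ℤ) :
    A k ≤ rr ^ k * (β * (1 - rr⁻¹)⁻¹) := by
  have hr := one_lt_rr
  have hr0 : 0 < rr := by linarith
  have hri : rr⁻¹ < 1 := inv_lt_one_of_one_lt₀ hr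
  set γ := β * (1 - rr⁻¹)⁻¹ with hγ
  have hγ0 : 0 ≤ γ := by
    have : 0 < 1 - rr⁻¹ := by linarith
    positivity
  have hγe : γ = β + rr⁻¹ * γ := by
    have : (1 - rr⁻¹) ≠ 0 := by linarith
    have h2 : γ * (1 - rr⁻¹) = β := by rw [hγ, mul_assoc, inv_mul_cancel₀ this, mul_one]
    linarith
  have key : ∀ n : ℕ, ∀ k, A k ≤ rr ^ k * (γ + rr⁻¹ ^ n * c0) := by
    intro n
    induction n with
    | zero =>
      intro k
      refine (hA k).trans ?_
      have := zpow_pos hr0 k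
      gcongr
      simpa using hγ0
    | succ n ih =>
      intro k
      refine (hrec k).trans ((add_le_add_right (ih (k - 1)) _).trans (le_of_eq ?_))
      rw [zpow_sub_one₀ hr0.ne', pow_succ]
      linear_combination (-rr ^ k) * hγe
  have hlim : Tendsto (fun n : ℕ => rr ^ k * (γ + rr⁻¹ ^ n * c0)) atTop
      (nhds (rr ^ k * (γ + 0 * c0))) :=
    ((tendsto_pow_atTop_nhds_zero_of_lt_one (by positivity) hri).mul_const c0).const_add γ
      |>.const_mul _
  have := ge_of_tendsto' hlim (fun n => key n k)
  simpa using this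

/-- The constant obtained by summing the Littlewood–Paley pieces below a threshold. -/
noncomputable def cL : ℝ≥0∞ := ENNReal.ofReal ((1 - rr⁻¹)⁻¹ ^ 2)

lemma inv1_chi_split (h : BumpBd φ K) (G : ℝ → ℂ) (hG : Nice G) (k : ℤ) (x : ℝ) :
    inv1 (mg (chi φ k) G) x
      = inv1 (mg (psi φ k) G) x + inv1 (mg (chi φ (k - 1)) G) x := by
  rw [← inv1_add (mg_integrable (psi_mult h k) hG) (mg_integrable (chi_mult h _) hG)]
  congr 1
  ext ξ
  simp only [mg, psi_eq]
  push_cast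
  ring

lemma inv1_one_split (h : BumpBd φ K) (G : ℝ → ℂ) (hG : Nice G) (k : ℤ) (x : ℝ) :
    inv1 (mg (fun _ => 1) G) x
      = inv1 (mg (chi φ k) G) x + inv1 (mg (oc φ k) G) x := by
  rw [← inv1_add (mg_integrable (chi_mult h k) hG) (mg_integrable (oc_mult h _) hG)]
  congr 1
  ext ξ
  simp only [mg, oc]
  push_cast
  ring

/-- Low frequencies are controlled pointwise by the Littlewood–Paley pieces. Bernstein's inequality
supplies the decay of the low-pass parts as `k → -∞` that lets the telescoping sum converge. -/
lemma low_bound (h : BumpBd φ K) (G : ℝ → ℂ) (hG : Nice G) (b : ℝ≥0∞) (hb : b ≠ ⊤) (x : ℝ)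
    (hj : ∀ j : ℤ, ‖inv1 (mg (psi φ j) G) x‖ₑ ^ 2 ≤ R j * b) (k : ℤ) :
    ‖inv1 (mg (chi φ k) G) x‖ₑ ^ 2 ≤ cL * R k * b := by
  have hr0 : 0 < rr := by linarith [one_lt_rr]
  -- passage from squared extended norms to real norms
  have conv : ∀ (z : ℂ) (j : ℤ) (e : ℝ≥0∞), e ≠ ⊤ → ‖z‖ₑ ^ 2 ≤ R j * e →
      ‖z‖ ≤ rr ^ j * √e.toReal := by
    intro z j e he hz
    rw [← ENNReal.ofReal_toReal he, R, ← ENNReal.ofReal_mul (zpow_pos rho_pos j).le,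
      ← ofReal_norm, ← ENNReal.ofReal_pow (norm_nonneg _),
      ENNReal.ofReal_le_ofReal_iff
        (mul_nonneg (zpow_pos rho_pos j).le ENNReal.toReal_nonneg)] at hz
    have h1 := zpow_pos hr0 j
    refine le_of_sq_le_sq ?_ (by positivity)
    rw [mul_pow, rr_zpow_sq, Real.sq_sqrt ENNReal.toReal_nonneg]
    exact hz
  have hfin : cB K * En G ≠ ⊤ := ENNReal.mul_ne_top ENNReal.ofReal_ne_top (En_ne_top hG)
  have key := geom_rec (fun k => ‖inv1 (mg (chi φ k) G) x‖) (√b.toReal) (√(cB K * En G).toReal)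
    (fun k => conv _ k _ hfin ((chi_bern h k G hG.meas x).trans (le_of_eq (by ring))))
    (fun k => by
      rw [inv1_chi_split h G hG k x]
      exact (norm_add_le _ _).trans (add_le_add_left (conv _ k b hb (hj k)) _))
    (Real.sqrt_nonneg _) k
  have h1 := zpow_pos rho_pos k
  rw [← ENNReal.ofReal_toReal hb, R, cL, ← ENNReal.ofReal_mul (by positivity),
    ← ENNReal.ofReal_mul (by positivity), ← ofReal_norm, ← ENNReal.ofReal_pow (norm_nonneg _)]
  apply ENNReal.ofReal_le_ofReal
  calc _ ≤ (rr ^ k * (√b.toReal * (1 - rr⁻¹)⁻¹)) ^ 2 := by gcongr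
    _ = _ := by
      rw [mul_pow, mul_pow, rr_zpow_sq, Real.sq_sqrt ENNReal.toReal_nonneg]; ring

/-- The constant in the high-frequency bound. -/
noncomputable def cH (K : ℝ) : ℝ≥0∞ :=
  ENNReal.ofReal ((2 * K) ^ 2) * ENNReal.ofReal ((1 - (rho ^ 2)⁻¹)⁻¹)

lemma cH_ne_top (K : ℝ) : cH K ≠ ⊤ := ENNReal.mul_ne_top ENNReal.ofReal_ne_top ENNReal.ofReal_ne_top

/-- High frequencies are controlled in `L²`, square-summed against the weights `2^{2k/3}`. -/
lemma high_bound (h : BumpBd φ K) (G : ℝ → ℂ) (hG : Nice G) :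
    ∑' k : ℤ, R (2 * k) * ∫⁻ x, ‖inv1 (mg (oc φ k) G) x‖ₑ ^ 2 ≤ cH K * En G := by
  have hGm := hG.meas.enorm
  have hK0 : 0 ≤ 2 * K := by linarith [h.one_le]
  have e1 : ∀ k : ℤ, R (2 * k) * ∫⁻ x, ‖inv1 (mg (oc φ k) G) x‖ₑ ^ 2
      ≤ ∫⁻ ξ, ENNReal.ofReal ((2 * K) ^ 2) *
          ((if (2 : ℝ) ^ k ≤ |ξ| then R (2 * k) else 0) * ‖G ξ‖ₑ ^ 2) := by
    intro k
    rw [plancherel_inv1 _ (mg_integrable (oc_mult h k) hG) (mg_memLp (oc_mult h k) hG),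
      ← lintegral_const_mul' _ _ (R_ne_top _)]
    apply lintegral_mono
    intro ξ
    simp only
    split_ifs with hξ
    · have : ‖mg (oc φ k) G ξ‖ₑ ≤ ENNReal.ofReal (2 * K) * ‖G ξ‖ₑ := by
        unfold mg
        rw [enorm_mul, ← ofReal_norm ((oc φ k ξ : ℝ) : ℂ), Complex.norm_real, Real.norm_eq_abs]
        gcongr
        exact oc_bd h k ξ
      calc _ ≤ R (2 * k) * (ENNReal.ofReal (2 * K) * ‖G ξ‖ₑ) ^ 2 := by gcongr
        _ = _ := by rw [mul_pow, ENNReal.ofReal_pow hK0]; ring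
    · simp [mg, oc_zero h k ξ (not_le.1 hξ).le]
  have hmeas : ∀ k : ℤ, Measurable fun ξ : ℝ => ENNReal.ofReal ((2 * K) ^ 2) *
          ((if (2 : ℝ) ^ k ≤ |ξ| then R (2 * k) else 0) * ‖G ξ‖ₑ ^ 2) := by
    intro k
    refine Measurable.const_mul (Measurable.mul ?_ (hGm.pow_const 2)) _
    exact Measurable.ite (measurableSet_le measurable_const (by fun_prop)) measurable_const
      measurable_const
  calc _ ≤ ∑' k : ℤ, ∫⁻ ξ, ENNReal.ofReal ((2 * K) ^ 2) *
          ((if (2 : ℝ) ^ k ≤ |ξ| then R (2 * k) else 0) * ‖G ξ‖ₑ ^ 2) := ENNReal.tsum_le_tsum e1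
    _ = ∫⁻ ξ, ∑' k : ℤ, ENNReal.ofReal ((2 * K) ^ 2) *
          ((if (2 : ℝ) ^ k ≤ |ξ| then R (2 * k) else 0) * ‖G ξ‖ₑ ^ 2) :=
        (lintegral_tsum fun k => (hmeas k).aemeasurable).symm
    _ ≤ ∫⁻ ξ, cH K * (wS ξ * ‖G ξ‖ₑ ^ 2) := by
        apply lintegral_mono
        intro ξ
        simp only
        rw [ENNReal.tsum_mul_left, ENNReal.tsum_mul_right, cH, mul_assoc, ← mul_assoc _ (wS ξ)]
        gcongr
        exact dyadic_sum ξ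
    _ = _ := by
        rw [lintegral_const_mul' _ _ (cH_ne_top K)]
        rfl

lemma inv1_mg_meas {m : ℝ → ℝ} {G : ℝ → ℂ} (hm : Mult m) (hG : Nice G) :
    Measurable (inv1 (mg m G)) := (inv1_continuous (mg_integrable hm hG)).measurable

/-- The constant in the one-dimensional refined inequality. -/
noncomputable def cR (K : ℝ) : ℝ≥0∞ := 16 * (2 * cL) ^ 2 * (2 * cH K)

/-- The one-dimensional refined Sobolev inequality: `‖g‖₆⁶ ≲ (sup_j 2^{-j/3} ‖Q_j g‖_∞²)² ‖g‖²`
with the homogeneous `Ḣ^{1/3}` norm on the right. -/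
lemma refined_1d (h : BumpBd φ K) (G : ℝ → ℂ) (hG : Nice G) (b : ℝ≥0∞) (hb : b ≠ ⊤)
    (hj : ∀ (j : ℤ) (y : ℝ), ‖inv1 (mg (psi φ j) G) y‖ₑ ^ 2 ≤ R j * b) :
    ∫⁻ y, ‖inv1 (mg (fun _ => 1) G) y‖ₑ ^ 6 ≤ cR K * b ^ 2 * En G := by
  set S : ℝ → ℝ≥0∞ := fun y => ∑' k : ℤ, R (2 * k) * ‖inv1 (mg (oc φ k) G) y‖ₑ ^ 2 with hS
  have hm : ∀ k : ℤ, Measurable fun y => R (2 * k) * ‖inv1 (mg (oc φ k) G) y‖ₑ ^ 2 := fun k =>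
    ((inv1_mg_meas (oc_mult h k) hG).enorm.pow_const 2).const_mul _
  have hSm : Measurable S := Measurable.tsum hm
  have hSi : ∫⁻ y, S y ≤ cH K * En G := by
    refine le_trans (le_of_eq ?_) (high_bound h G hG)
    rw [hS, lintegral_tsum fun k => (hm k).aemeasurable]
    congr 1
    ext k
    rw [lintegral_const_mul' _ _ (R_ne_top _)]
  have hSf : ∀ᵐ y, S y < ⊤ := ae_lt_top hSm
    (ne_top_of_le_ne_top (ENNReal.mul_ne_top (cH_ne_top K) (En_ne_top hG)) hSi)
  have hcL : cL ≠ ⊤ := ENNReal.ofReal_ne_top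
  calc _ ≤ ∫⁻ y, 16 * (2 * (cL * b)) ^ 2 * (2 * S y) := by
        apply lintegral_mono_ae
        filter_upwards [hSf] with y hy
        rw [show (6 : ℕ) = 2 * 3 by norm_num, pow_mul]
        refine cubic_bound _ _ _ (fun k => 2 * ‖inv1 (mg (oc φ k) G) y‖ₑ ^ 2)
          (ENNReal.mul_ne_top (by norm_num) (ENNReal.mul_ne_top hcL hb))
          (ENNReal.mul_ne_top (by norm_num) hy.ne) (fun k => ?_) (fun k => ?_)
        · rw [inv1_one_split h G hG k y]
          refine (enorm_sq_add_le _ _).trans ?_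
          have := low_bound h G hG b hb y (fun j => hj j y) k
          calc _ ≤ 2 * (cL * R k * b) + 2 * ‖inv1 (mg (oc φ k) G) y‖ₑ ^ 2 := by gcongr
            _ = _ := by ring
        · rw [mul_left_comm]
          gcongr
          exact ENNReal.le_tsum (f := fun k : ℤ => R (2 * k) * ‖inv1 (mg (oc φ k) G) y‖ₑ ^ 2) k
    _ = 16 * (2 * (cL * b)) ^ 2 * (2 * ∫⁻ y, S y) := by
        rw [lintegral_const_mul _ (hSm.const_mul _), lintegral_const_mul _ hSm]
    _ ≤ 16 * (2 * (cL * b)) ^ 2 * (2 * (cH K * En G)) := by gcongr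
    _ = _ := by unfold cR; ring

end OneDim

/-! ### The refined inequality on the Fourier side of the plane -/

/-- Measurable functions on the plane decaying like `(1 + ξ²)⁻² (1 + η²)⁻²`. -/
structure Nice2 (F : ℝ × ℝ → ℂ) : Prop where
  meas : Measurable F
  bound : ∃ D : ℝ, 0 ≤ D ∧ ∀ ξ η, ‖F (ξ, η)‖ ≤ D * (wt ξ ^ 2 * wt η ^ 2)

/-- The slice `F(·, η)`. -/
def row (F : ℝ × ℝ → ℂ) (η : ℝ) : ℝ → ℂ := fun ξ => F (ξ, η)

/-- The partial inverse Fourier transform in the first variable of `m(ξ) F(ξ, η)`. -/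
noncomputable def T (m : ℝ → ℝ) (F : ℝ × ℝ → ℂ) (x η : ℝ) : ℂ := inv1 (mg m (row F η)) x

/-- The full inverse Fourier transform of `m(ξ) n(η) F(ξ, η)`. -/
noncomputable def A (m n : ℝ → ℝ) (F : ℝ × ℝ → ℂ) : ℝ × ℝ → ℂ :=
  ftInv (fun p : ℝ × ℝ => ((m p.1 * n p.2 : ℝ) : ℂ) * F p)

lemma wt_sq_le (η : ℝ) : wt η ^ 2 ≤ 1 := pow_le_one₀ (wt_pos η).le (wt_le_one η)

lemma Nice2.row {F : ℝ × ℝ → ℂ} (hF : Nice2 F) (η : ℝ) : Nice (row F η) := by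
  obtain ⟨D, hD0, hD⟩ := hF.bound
  refine ⟨hF.meas.comp (by fun_prop), D, hD0, fun ξ => (hD ξ η).trans ?_⟩
  have := wt_sq_le η
  have h1 := wt_pos ξ
  calc D * (wt ξ ^ 2 * wt η ^ 2) ≤ D * (wt ξ ^ 2 * 1) := by gcongr
    _ = _ := by ring

lemma Nice2.swap {F : ℝ × ℝ → ℂ} (hF : Nice2 F) : Nice2 (fun p => F p.swap) := by
  obtain ⟨D, hD0, hD⟩ := hF.bound
  refine ⟨hF.meas.comp measurable_swap, D, hD0, fun ξ η => (hD η ξ).trans (le_of_eq (by ring))⟩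

lemma T_meas {m : ℝ → ℝ} {F : ℝ × ℝ → ℂ} (hm : Measurable m) (hF : Measurable F) :
    Measurable (fun p : ℝ × ℝ => T m F p.1 p.2) := by
  have : StronglyMeasurable (fun q : (ℝ × ℝ) × ℝ =>
      Complex.exp (2 * Real.pi * (q.1.1 * q.2) * Complex.I) * ((m q.2 : ℂ) * F (q.2, q.1.2))) := by
    apply Measurable.stronglyMeasurable
    fun_prop
  exact this.integral_prod_right.measurable

lemma T_nice {m : ℝ → ℝ} {F : ℝ × ℝ → ℂ} (hm : Mult m) (hF : Nice2 F) (x : ℝ) :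
    Nice (T m F x) := by
  obtain ⟨D, hD0, hD⟩ := hF.bound
  obtain ⟨K, hK0, hK⟩ := hm.bound
  refine ⟨(T_meas hm.meas hF.meas).comp (g := fun p : ℝ × ℝ => T m F p.1 p.2)
    (f := fun η => (x, η)) (by fun_prop), K * D * ∫ ξ, wt ξ, ?_, fun η => ?_⟩
  · have : 0 ≤ ∫ ξ, wt ξ := integral_nonneg fun ξ => (wt_pos ξ).le
    positivity
  · have hw := wt_pos η
    have h1 : ∀ ξ, ‖row F η ξ‖ ≤ (D * wt η ^ 2) * wt ξ ^ 2 := fun ξ =>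
      (hD ξ η).trans (le_of_eq (by ring))
    have h2 := mg_norm_le hK (by positivity) h1
    calc ‖T m F x η‖ ≤ ∫ ξ, K * (D * wt η ^ 2) * wt ξ := by
          refine norm_integral_le_of_norm_le (wt_integrable.const_mul _)
            (Eventually.of_forall fun ξ => ?_)
          rw [norm_mul, norm_char_mul, one_mul]
          exact h2 ξ
      _ = _ := by rw [integral_const_mul]; ring

lemma plane_integrable {m n : ℝ → ℝ} {F : ℝ × ℝ → ℂ} (hm : Mult m) (hn : Mult n)
    (hF : Nice2 F) : Integrable (fun p : ℝ × ℝ => ((m p.1 * n p.2 : ℝ) : ℂ) * F p) := by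
  obtain ⟨D, hD0, hD⟩ := hF.bound
  obtain ⟨K, hK0, hK⟩ := hm.bound
  obtain ⟨K', hK0', hK'⟩ := hn.bound
  have hmm := hm.meas
  have hnm := hn.meas
  have hFm := hF.meas
  refine ((wt_integrable.mul_prod wt_integrable).const_mul (K * K' * D)).mono'
    (Measurable.aestronglyMeasurable (by fun_prop)) (Eventually.of_forall ?_)
  rintro ⟨ξ, η⟩
  have h1 := wt_pos ξ
  have h2 := wt_pos η
  rw [norm_mul, Complex.norm_real, Real.norm_eq_abs, abs_mul]
  simp only
  calc |m ξ| * |n η| * ‖F (ξ, η)‖ ≤ |m ξ| * |n η| * (D * (wt ξ ^ 2 * wt η ^ 2)) := by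
        gcongr; exact hD ξ η
    _ = (|m ξ| * wt ξ) * (|n η| * wt η) * (D * (wt ξ * wt η)) := by ring
    _ ≤ K * K' * (D * (wt ξ * wt η)) := by
        gcongr
        · exact hK ξ
        · exact hK' η
    _ = _ := by ring

lemma norm_char2 (x y ξ η : ℝ) :
    ‖Complex.exp (2 * Real.pi * (x * ξ + y * η) * Complex.I)‖ = 1 := by
  have := Complex.norm_exp_ofReal_mul_I (2 * Real.pi * (x * ξ + y * η))
  push_cast at this
  exact this

lemma plane_char_integrable {g : ℝ × ℝ → ℂ} (hg : Integrable g) (x y : ℝ) :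
    Integrable (fun p : ℝ × ℝ =>
      Complex.exp (2 * Real.pi * (x * p.1 + y * p.2) * Complex.I) * g p) := by
  refine hg.norm.mono' ?_ (Eventually.of_forall fun p => ?_)
  · exact (Continuous.aestronglyMeasurable (by fun_prop)).mul hg.aestronglyMeasurable
  · rw [norm_mul, norm_char2, one_mul]

lemma ftInv_continuous {g : ℝ × ℝ → ℂ} (hg : Integrable g) : Continuous (ftInv g) := by
  refine continuous_of_dominated (bound := fun p => ‖g p‖)
    (fun x => (plane_char_integrable hg x.1 x.2).aestronglyMeasurable)
    (fun x => Eventually.of_forall fun p => ?_) hg.norm (Eventually.of_forall fun p => ?_)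
  · rw [norm_mul, norm_char2, one_mul]
  · fun_prop

/-- The multiplier `m(ξ) n(η)` may be applied in the first variable and then in the second. -/
lemma A_eq {m n : ℝ → ℝ} {F : ℝ × ℝ → ℂ} (hm : Mult m) (hn : Mult n) (hF : Nice2 F) (x y : ℝ) :
    A m n F (x, y) = inv1 (mg n (T m F x)) y := by
  have hI := plane_char_integrable (plane_integrable hm hn hF) x y
  unfold A ftInv
  rw [Measure.volume_eq_prod] at hI ⊢
  rw [integral_prod_symm _ hI]
  unfold inv1 mg T
  congr 1
  ext η
  unfold inv1 mg row
  rw [← integral_const_mul, ← integral_const_mul]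
  congr 1
  ext ξ
  simp only
  rw [mul_add, add_mul, Complex.exp_add]
  push_cast
  ring

/-- The multiplier `m(ξ) n(η)` may be applied in the second variable and then in the first. -/
lemma A_eq' {m n : ℝ → ℝ} {F : ℝ × ℝ → ℂ} (hm : Mult m) (hn : Mult n) (hF : Nice2 F) (x y : ℝ) :
    A m n F (x, y) = inv1 (mg m (T n (fun p => F p.swap) y)) x := by
  rw [← A_eq hn hm hF.swap y x]
  unfold A ftInv
  rw [Measure.volume_eq_prod, ← integral_prod_swap]
  congr 1
  ext p
  simp only [Prod.fst_swap, Prod.snd_swap]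
  rw [add_comm, mul_comm (m _)]

/-- The squared anisotropic Sobolev norm `∬ |ξ|^{2/3} |η|^{2/3} |F(ξ,η)|² dξ dη` on the Fourier
side. -/
noncomputable def H2 (F : ℝ × ℝ → ℂ) : ℝ≥0∞ := ∫⁻ η, wS η * En (row F η)

lemma En_meas {G : ℝ × ℝ → ℂ} (hG : Measurable G) :
    Measurable (fun x : ℝ => En (fun η => G (x, η))) := by
  have h1 := wS_meas
  have h2 := hG.enorm
  unfold En
  exact Measurable.lintegral_prod_right' (f := fun p : ℝ × ℝ => wS p.2 * ‖G p‖ₑ ^ 2) (by fun_prop)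

lemma En_le {G : ℝ → ℂ} {D : ℝ} (hD : ∀ η, ‖G η‖ ≤ D * wt η ^ 2) :
    En G ≤ ENNReal.ofReal D ^ 2 * En (fun η => ((wt η ^ 2 : ℝ) : ℂ)) := by
  unfold En
  rw [← lintegral_const_mul' _ _ (by finiteness)]
  apply lintegral_mono
  intro ξ
  simp only
  rw [mul_left_comm, ← mul_pow, ← ofReal_norm, ← ofReal_norm ((wt ξ ^ 2 : ℝ) : ℂ),
    Complex.norm_real, Real.norm_of_nonneg (by have := wt_pos ξ; positivity),
    ← ENNReal.ofReal_mul' (by have := wt_pos ξ; positivity)]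
  gcongr
  exact hD ξ

lemma wt_nice : Nice (fun η => ((wt η ^ 2 : ℝ) : ℂ)) := by
  refine ⟨?_, 1, by norm_num, fun η => ?_⟩
  · have := wt_cont.measurable
    fun_prop
  · rw [Complex.norm_real, Real.norm_of_nonneg (by have := wt_pos η; positivity), one_mul]

lemma H2_ne_top {F : ℝ × ℝ → ℂ} (hF : Nice2 F) : H2 F ≠ ⊤ := by
  obtain ⟨D, hD0, hD⟩ := hF.bound
  set e := En (fun η => ((wt η ^ 2 : ℝ) : ℂ)) with he
  have he' : e ≠ ⊤ := En_ne_top wt_nice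
  have h1 : H2 F ≤ ∫⁻ η, (ENNReal.ofReal D ^ 2 * e) *
      (wS η * ‖((wt η ^ 2 : ℝ) : ℂ)‖ₑ ^ 2) := by
    unfold H2
    apply lintegral_mono
    intro η
    have h2 : ∀ ξ, ‖row F η ξ‖ ≤ (D * wt η ^ 2) * wt ξ ^ 2 := fun ξ =>
      (hD ξ η).trans (le_of_eq (by ring))
    calc wS η * En (row F η) ≤ wS η * (ENNReal.ofReal (D * wt η ^ 2) ^ 2 * e) := by
          gcongr; exact En_le h2
      _ = _ := by
          simp only
          rw [← ofReal_norm, Complex.norm_real,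
            Real.norm_of_nonneg (by have := wt_pos η; positivity), ENNReal.ofReal_mul hD0]
          ring
  rw [lintegral_const_mul' _ _ (by finiteness)] at h1
  exact ne_top_of_le_ne_top (ENNReal.mul_ne_top (by finiteness) he') h1

/-- Plancherel's theorem in both variables. -/
lemma aniso_plancherel {m : ℝ → ℝ} {F : ℝ × ℝ → ℂ} (hm : Mult m)
    (hm2 : ∀ ξ, ‖((m ξ : ℝ) : ℂ)‖ₑ ^ 2 = wS ξ) (hF : Nice2 F) :
    ∫⁻ x, ∫⁻ y, ‖A m m F (x, y)‖ₑ ^ 2 = H2 F := by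
  have hpl : ∀ G, Nice G → ∫⁻ y, ‖inv1 (mg m G) y‖ₑ ^ 2 = En G := by
    intro G hG
    rw [plancherel_inv1 _ (mg_integrable hm hG) (mg_memLp hm hG)]
    unfold En mg
    simp_rw [enorm_mul, mul_pow, hm2]
  simp_rw [A_eq hm hm hF, hpl _ (T_nice hm hF _)]
  unfold En H2
  have h1 := wS_meas
  have h2 := (T_meas hm.meas hF.meas).enorm
  rw [lintegral_lintegral_swap (Measurable.aemeasurable (by fun_prop))]
  congr 1
  ext η
  have h3 : Measurable fun x => ‖T m F x η‖ₑ ^ 2 :=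
    (h2.comp (measurable_id.prodMk measurable_const)).pow_const 2
  rw [lintegral_const_mul _ h3, ← hpl _ (hF.row η)]
  rfl

lemma cB_ne_top (K : ℝ) : cB K ≠ ⊤ := ENNReal.ofReal_ne_top

section Plane

variable {φ : ℝ → ℝ} {K : ℝ}

/-- Bernstein's inequality in the first variable, in the weighted `L²` space of the second. -/
lemma En_T_le {m : ℝ → ℝ} (k : ℤ) {F : ℝ × ℝ → ℂ}
    (hb : ∀ (G : ℝ → ℂ), Measurable G → ∀ x, ‖inv1 (mg m G) x‖ₑ ^ 2 ≤ cB K * R k * En G)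
    (hF : Nice2 F) (x : ℝ) : En (T m F x) ≤ cB K * R k * H2 F := by
  unfold H2
  rw [← lintegral_const_mul' _ _ (ENNReal.mul_ne_top (cB_ne_top K) (R_ne_top k))]
  unfold En
  apply lintegral_mono
  intro η
  calc wS η * ‖T m F x η‖ₑ ^ 2 ≤ wS η * (cB K * R k * En (row F η)) := by
        gcongr; exact hb _ (hF.row η).meas x
    _ = _ := by unfold En; ring

/-- Bernstein's inequality in both variables. -/
lemma A_psi_le (h : BumpBd φ K) {F : ℝ × ℝ → ℂ} (hF : Nice2 F) (k l : ℤ) (x y : ℝ) :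
    ‖A (psi φ k) (psi φ l) F (x, y)‖ₑ ^ 2 ≤ R k * R l * (cB K ^ 2 * H2 F) := by
  rw [A_eq (psi_mult h k) (psi_mult h l) hF]
  have h1 := psi_bern h l _ (T_nice (psi_mult h k) hF x).meas y
  have h2 := En_T_le k (psi_bern h k) hF x
  calc _ ≤ cB K * R l * (cB K * R k * H2 F) := h1.trans (by gcongr)
    _ = _ := by ring

/-- The weighted square function of the high-frequency parts (in the first variable), measured in
the weighted `L²` space of the second variable. -/
noncomputable def W (φ : ℝ → ℝ) (F : ℝ × ℝ → ℂ) (x : ℝ) : ℝ≥0∞ :=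
  ∑' k : ℤ, R (2 * k) * En (T (oc φ k) F x)

lemma W_term_meas (h : BumpBd φ K) {F : ℝ × ℝ → ℂ} (hF : Nice2 F) (k : ℤ) :
    Measurable fun x => R (2 * k) * En (T (oc φ k) F x) :=
  (En_meas (T_meas (oc_mult h k).meas hF.meas)).const_mul _

lemma W_meas (h : BumpBd φ K) {F : ℝ × ℝ → ℂ} (hF : Nice2 F) : Measurable (W φ F) :=
  Measurable.tsum (W_term_meas h hF)

lemma le_W (F : ℝ × ℝ → ℂ) (x : ℝ) (k : ℤ) : R (2 * k) * En (T (oc φ k) F x) ≤ W φ F x :=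
  ENNReal.le_tsum (f := fun k : ℤ => R (2 * k) * En (T (oc φ k) F x)) k

/-- The high-frequency bound in the first variable, integrated over the second frequency. -/
lemma W_lintegral (h : BumpBd φ K) {F : ℝ × ℝ → ℂ} (hF : Nice2 F) :
    ∫⁻ x, W φ F x ≤ cH K * H2 F := by
  have hw := wS_meas
  have hT : ∀ k : ℤ, Measurable fun p : ℝ × ℝ => ‖T (oc φ k) F p.1 p.2‖ₑ ^ 2 := fun k =>
    (T_meas (oc_mult h k).meas hF.meas).enorm.pow_const 2
  have hT' : ∀ (k : ℤ) (η : ℝ), Measurable fun x => ‖T (oc φ k) F x η‖ₑ ^ 2 := fun k η =>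
    Measurable.comp (g := fun p : ℝ × ℝ => ‖T (oc φ k) F p.1 p.2‖ₑ ^ 2) (f := fun x => (x, η))
      (hT k) (by fun_prop)
  have hT2 : ∀ k : ℤ, Measurable fun η => ∫⁻ x, ‖T (oc φ k) F x η‖ₑ ^ 2 := fun k =>
    Measurable.lintegral_prod_left' (hT k)
  have e1 : ∀ k : ℤ, ∫⁻ x, R (2 * k) * En (T (oc φ k) F x)
      = ∫⁻ η, wS η * (R (2 * k) * ∫⁻ x, ‖T (oc φ k) F x η‖ₑ ^ 2) := by
    intro k
    have := hT k
    rw [lintegral_const_mul' _ _ (R_ne_top _)]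
    unfold En
    rw [lintegral_lintegral_swap (Measurable.aemeasurable (by fun_prop)),
      ← lintegral_const_mul' _ _ (R_ne_top _)]
    congr 1
    ext η
    rw [lintegral_const_mul _ (hT' k η)]
    ring
  have hm : ∀ k : ℤ, AEMeasurable fun η =>
      wS η * (R (2 * k) * ∫⁻ x, ‖T (oc φ k) F x η‖ₑ ^ 2) := fun k =>
    (hw.mul ((hT2 k).const_mul _)).aemeasurable
  calc ∫⁻ x, W φ F x = ∑' k : ℤ, ∫⁻ x, R (2 * k) * En (T (oc φ k) F x) :=
        lintegral_tsum fun k => (W_term_meas h hF k).aemeasurable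
    _ = ∑' k : ℤ, ∫⁻ η, wS η * (R (2 * k) * ∫⁻ x, ‖T (oc φ k) F x η‖ₑ ^ 2) := by
        congr 1
        ext k
        exact e1 k
    _ = ∫⁻ η, ∑' k : ℤ, wS η * (R (2 * k) * ∫⁻ x, ‖T (oc φ k) F x η‖ₑ ^ 2) :=
        (lintegral_tsum hm).symm
    _ ≤ ∫⁻ η, cH K * (wS η * En (row F η)) := by
        apply lintegral_mono
        intro η
        simp only
        rw [ENNReal.tsum_mul_left, mul_left_comm]
        gcongr
        exact high_bound h _ (hF.row η)
    _ = _ := lintegral_const_mul' _ _ (cH_ne_top K)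

lemma T_split (h : BumpBd φ K) {F : ℝ × ℝ → ℂ} (hF : Nice2 F) (k : ℤ) (x η : ℝ) :
    T (fun _ => 1) F x η = T (chi φ k) F x η + T (oc φ k) F x η :=
  inv1_one_split h _ (hF.row η) k x

lemma En_add_le {G H : ℝ → ℂ} (hG : Measurable G) (hH : Measurable H) :
    En (fun η => G η + H η) ≤ 2 * En G + 2 * En H := by
  have h0 := wS_meas
  have h1 := hG.enorm
  have h2 := hH.enorm
  unfold En
  rw [← lintegral_const_mul _ (by fun_prop), ← lintegral_const_mul _ (by fun_prop),
    ← lintegral_add_left (by fun_prop)]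
  apply lintegral_mono
  intro ξ
  calc wS ξ * ‖G ξ + H ξ‖ₑ ^ 2 ≤ wS ξ * (2 * ‖G ξ‖ₑ ^ 2 + 2 * ‖H ξ‖ₑ ^ 2) := by
        gcongr; exact enorm_sq_add_le _ _
    _ = _ := by ring

/-- The refined inequality in the first variable, with values in the weighted `L²` space of the
second. -/
lemma En_T_one_cube (h : BumpBd φ K) {F : ℝ × ℝ → ℂ} (hF : Nice2 F) (x : ℝ) (hW : W φ F x ≠ ⊤) :
    En (T (fun _ => 1) F x) ^ 3 ≤ 16 * (2 * cB K * H2 F) ^ 2 * (2 * W φ F x) := by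
  have hcB := cB_ne_top K
  have hH := H2_ne_top hF
  refine cubic_bound _ _ _ (fun k => 2 * En (T (oc φ k) F x)) (by finiteness) (by finiteness)
    (fun k => ?_) (fun k => ?_)
  · have e : T (fun _ => 1) F x = fun η => T (chi φ k) F x η + T (oc φ k) F x η :=
      funext (T_split h hF k x)
    rw [e]
    refine (En_add_le (T_nice (chi_mult h k) hF x).meas (T_nice (oc_mult h k) hF x).meas).trans ?_
    have := En_T_le k (chi_bern h k) hF x
    calc _ ≤ 2 * (cB K * R k * H2 F) + 2 * En (T (oc φ k) F x) := by gcongr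
      _ = _ := by ring
  · rw [mul_left_comm]
    gcongr
    exact le_W F x k

/-- The refined inequality in the first variable for each Littlewood–Paley piece in the second,
in the supremum norm of the second variable. -/
lemma piece_cube (h : BumpBd φ K) {F : ℝ × ℝ → ℂ} (hF : Nice2 F) (q : ℝ≥0∞) (hq : q ≠ ⊤)
    (hA : ∀ k l x y, ‖A (psi φ k) (psi φ l) F (x, y)‖ₑ ^ 2 ≤ R k * R l * q)
    (x : ℝ) (hW : W φ F x ≠ ⊤) (l : ℤ) (y : ℝ) :
    (R (-l) * ‖inv1 (mg (psi φ l) (T (fun _ => 1) F x)) y‖ₑ ^ 2) ^ 3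
      ≤ 16 * (2 * cL * q) ^ 2 * (2 * cB K * W φ F x) := by
  have hcB := cB_ne_top K
  have hcL : cL ≠ ⊤ := ENNReal.ofReal_ne_top
  refine cubic_bound _ _ _ (fun k => 2 * cB K * En (T (oc φ k) F x)) (by finiteness)
    (by finiteness) (fun k => ?_) (fun k => ?_)
  · have hlow : ‖inv1 (mg (psi φ l) (T (chi φ k) F x)) y‖ₑ ^ 2 ≤ cL * R k * (R l * q) := by
      rw [← A_eq (chi_mult h k) (psi_mult h l) hF, A_eq' (chi_mult h k) (psi_mult h l) hF]
      refine low_bound h _ (T_nice (psi_mult h l) hF.swap y) _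
        (ENNReal.mul_ne_top (R_ne_top l) hq) x (fun j => ?_) k
      rw [← A_eq' (psi_mult h j) (psi_mult h l) hF, ← mul_assoc]
      exact hA j l x y
    have hhigh := psi_bern h l _ (T_nice (oc_mult h k) hF x).meas y
    have e : inv1 (mg (psi φ l) (T (fun _ => 1) F x)) y
        = inv1 (mg (psi φ l) (T (chi φ k) F x)) y + inv1 (mg (psi φ l) (T (oc φ k) F x)) y := by
      rw [← inv1_add (mg_integrable (psi_mult h l) (T_nice (chi_mult h k) hF x))
        (mg_integrable (psi_mult h l) (T_nice (oc_mult h k) hF x))]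
      congr 1
      ext η
      simp only [mg, T_split h hF k x η]
      ring
    rw [e]
    calc _ ≤ R (-l) * (2 * (cL * R k * (R l * q)) + 2 * (cB K * R l * En (T (oc φ k) F x))) := by
          gcongr
          refine (enorm_sq_add_le _ _).trans ?_
          gcongr
      _ = (R (-l) * R l) * (R k * (2 * cL * q) + 2 * cB K * En (T (oc φ k) F x)) := by ring
      _ = _ := by rw [R_neg_mul, one_mul]
  · rw [mul_left_comm]
    gcongr
    exact le_W F x k

/-- The constants of the two cubic bounds (the first squared) times that of `B² ≲ H²`, as they combine
on each line. -/
noncomputable def cM (K : ℝ) : ℝ≥0∞ :=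
  (16 * (2 * cL) ^ 2 * (2 * cB K)) ^ 2 * (16 * (2 * cB K) ^ 2 * 2) * cB K ^ 2

/-- The `L⁶` norm on a vertical line where `W` is finite is controlled by `W`: the one-dimensional
refined inequality in `y` is fed with the two cubic bounds in `x`. -/
lemma line_bound (h : BumpBd φ K) {F : ℝ × ℝ → ℂ} (hF : Nice2 F) (q : ℝ≥0∞)
    (hqH : q ≤ cB K ^ 2 * H2 F)
    (hA : ∀ k l x y, ‖A (psi φ k) (psi φ l) F (x, y)‖ₑ ^ 2 ≤ R k * R l * q)
    (x : ℝ) (hW : W φ F x ≠ ⊤) :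
    ∫⁻ y, ‖A (fun _ => 1) (fun _ => 1) F (x, y)‖ₑ ^ 6
      ≤ cR K * (cM K + 1) * q * H2 F * W φ F x := by
  have hcB := cB_ne_top K
  have hcL : cL ≠ ⊤ := ENNReal.ofReal_ne_top
  have hH := H2_ne_top hF
  have hq : q ≠ ⊤ := ne_top_of_le_ne_top (by finiteness) hqH
  set X := 16 * (2 * cL * q) ^ 2 * (2 * cB K * W φ F x) with hX
  have hXt : X ≠ ⊤ := by finiteness
  set b := X ^ (1 / 3 : ℝ) with hb
  have hb3 : b ^ 3 = X := by
    rw [hb, ← ENNReal.rpow_natCast, ← ENNReal.rpow_mul]; norm_num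
  have hbt : b ≠ ⊤ := ENNReal.rpow_ne_top_of_nonneg (by norm_num) hXt
  simp_rw [A_eq Mult.one Mult.one hF]
  have h1 := refined_1d h _ (T_nice Mult.one hF x) b hbt (fun l y => by
    have := piece_cube h hF q hq hA x hW l y
    rw [← hX, ← hb3, ENNReal.pow_le_pow_left_iff (by norm_num)] at this
    calc _ = R l * (R (-l) * ‖inv1 (mg (psi φ l) (T (fun _ => 1) F x)) y‖ₑ ^ 2) := by
          rw [← mul_assoc, mul_comm (R l), R_neg_mul, one_mul]
      _ ≤ _ := by gcongr)
  refine h1.trans ?_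
  have h2 := En_T_one_cube h hF x hW
  -- in the cube of the left side one surplus factor `q` is traded for the energy, which leaves
  -- exactly the cube of `q * H2 F * W`
  have h3 : b ^ 2 * En (T (fun _ => 1) F x) ≤ (cM K + 1) * q * H2 F * W φ F x := by
    rw [← ENNReal.pow_le_pow_left_iff (n := 3) (by norm_num)]
    calc (b ^ 2 * En (T (fun _ => 1) F x)) ^ 3 = (b ^ 3) ^ 2 * En (T (fun _ => 1) F x) ^ 3 := by
          ring
      _ ≤ X ^ 2 * (16 * (2 * cB K * H2 F) ^ 2 * (2 * W φ F x)) := by rw [hb3]; gcongr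
      _ = (16 * (2 * cL) ^ 2 * (2 * cB K)) ^ 2 * (16 * (2 * cB K) ^ 2 * 2) *
            q ^ 3 * q * H2 F ^ 2 * W φ F x ^ 3 := by rw [hX]; ring
      _ ≤ (16 * (2 * cL) ^ 2 * (2 * cB K)) ^ 2 * (16 * (2 * cB K) ^ 2 * 2) *
            q ^ 3 * (cB K ^ 2 * H2 F) * H2 F ^ 2 * W φ F x ^ 3 := by gcongr
      _ = cM K * (q * H2 F * W φ F x) ^ 3 := by unfold cM; ring
      _ ≤ (cM K + 1) ^ 3 * (q * H2 F * W φ F x) ^ 3 := by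
          gcongr
          calc cM K ≤ cM K + 1 := le_self_add
            _ = (cM K + 1) ^ 1 := (pow_one _).symm
            _ ≤ (cM K + 1) ^ 3 := pow_le_pow_right₀ le_add_self (by norm_num)
      _ = _ := by ring
  calc _ = cR K * (b ^ 2 * En (T (fun _ => 1) F x)) := by ring
    _ ≤ cR K * ((cM K + 1) * q * H2 F * W φ F x) := by gcongr
    _ = _ := by ring

/-- The constant in the sixth power of the refined inequality. -/
noncomputable def cT (K : ℝ) : ℝ≥0∞ := cR K * (cM K + 1) * cH K

lemma cT_ne_top (K : ℝ) : cT K ≠ ⊤ := by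
  have hcB := cB_ne_top K
  have hcL : cL ≠ ⊤ := ENNReal.ofReal_ne_top
  have := cH_ne_top K
  unfold cT cR cM
  finiteness

/-- The sixth power of the refined inequality, with `q` the square of the Besov-type supremum. -/
lemma plane_bound (h : BumpBd φ K) {F : ℝ × ℝ → ℂ} (hF : Nice2 F) (q : ℝ≥0∞)
    (hqH : q ≤ cB K ^ 2 * H2 F)
    (hA : ∀ k l x y, ‖A (psi φ k) (psi φ l) F (x, y)‖ₑ ^ 2 ≤ R k * R l * q) :
    ∫⁻ x, ∫⁻ y, ‖A (fun _ => 1) (fun _ => 1) F (x, y)‖ₑ ^ 6 ≤ cT K * q * H2 F ^ 2 := by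
  have hW := W_lintegral h hF
  have hWf : ∀ᵐ x, W φ F x < ⊤ := ae_lt_top (W_meas h hF)
    (ne_top_of_le_ne_top (ENNReal.mul_ne_top (cH_ne_top K) (H2_ne_top hF)) hW)
  calc _ ≤ ∫⁻ x, cR K * (cM K + 1) * q * H2 F * W φ F x := by
        apply lintegral_mono_ae
        filter_upwards [hWf] with x hx
        exact line_bound h hF q hqH hA x hx.ne
    _ = cR K * (cM K + 1) * q * H2 F * ∫⁻ x, W φ F x := lintegral_const_mul _ (W_meas h hF)
    _ ≤ cR K * (cM K + 1) * q * H2 F * (cH K * H2 F) := by gcongr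
    _ = _ := by unfold cT; ring

end Plane

/-! ### Passage to the function and its norms -/

lemma ft_nice2 (f : ℝ × ℝ → ℂ) (hf : ContDiff ℝ (⊤ : ℕ∞) f) (hc : HasCompactSupport f) :
    Nice2 (ft f) :=
  ⟨(ft_continuous f hf hc).measurable, ft_decay f hf hc⟩

lemma eLpNorm_pow_eq (n : ℕ) (hn : n ≠ 0) {g : ℝ × ℝ → ℂ} (hg : Measurable g) :
    eLpNorm g n volume ^ n = ∫⁻ x, ∫⁻ y, ‖g (x, y)‖ₑ ^ n := by
  have h := eLpNorm_nnreal_pow_eq_lintegral (f := g) (μ := (volume : Measure (ℝ × ℝ)))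
    (p := (n : NNReal)) (by exact_mod_cast hn)
  simp only [NNReal.coe_natCast, ENNReal.rpow_natCast, ENNReal.coe_natCast] at h
  rw [h, Measure.volume_eq_prod, lintegral_prod _ (hg.enorm.pow_const n).aemeasurable]

/-- A continuous function is bounded everywhere, not only almost everywhere, by its `L^∞` norm. -/
lemma enorm_le_eLpNorm_top {g : ℝ × ℝ → ℂ} (hg : Continuous g) (p : ℝ × ℝ) :
    ‖g p‖ₑ ≤ eLpNorm g ⊤ volume := by
  rw [eLpNorm_exponent_top]
  by_contra! h
  have ho : IsOpen {p | eLpNormEssSup g volume < ‖g p‖ₑ} := isOpen_lt continuous_const hg.enorm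
  have h0 : volume {p | eLpNormEssSup g volume < ‖g p‖ₑ} = 0 := by
    have := enorm_ae_le_eLpNormEssSup g (volume : Measure (ℝ × ℝ))
    rw [ae_iff] at this
    simpa only [not_le] using this
  have := ho.measure_eq_zero_iff volume |>.1 h0
  exact this.subset h

lemma third_mult : Mult (fun ξ => |ξ| ^ (1 / 3 : ℝ)) := by
  refine ⟨by fun_prop, 1, by norm_num, fun ξ => ?_⟩
  rw [abs_of_nonneg (by positivity), wt, ← div_eq_mul_inv, div_le_one (by positivity)]
  exact rpow_le_one_add_sq _ (by norm_num) (by norm_num) ξ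

lemma third_sq (ξ : ℝ) : ‖((|ξ| ^ (1 / 3 : ℝ) : ℝ) : ℂ)‖ₑ ^ 2 = wS ξ := by
  rw [← ofReal_norm, Complex.norm_real, Real.norm_of_nonneg (by positivity),
    ← ENNReal.ofReal_pow (by positivity), wS, ← Real.rpow_natCast, ← Real.rpow_mul (abs_nonneg _)]
  norm_num

lemma anisoDeriv_eq (f : ℝ × ℝ → ℂ) : anisoDeriv (2 / 3) f
    = A (fun ξ => |ξ| ^ (1 / 3 : ℝ)) (fun ξ => |ξ| ^ (1 / 3 : ℝ)) (ft f) := by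
  unfold anisoDeriv A
  norm_num

lemma QMN_eq (φ : ℝ → ℝ) (k l : ℤ) (f : ℝ × ℝ → ℂ) :
    QMN φ ((2 : ℝ) ^ k) ((2 : ℝ) ^ l) f = A (psi φ k) (psi φ l) (ft f) := rfl

lemma A_continuous {m n : ℝ → ℝ} {F : ℝ × ℝ → ℂ} (hm : Mult m) (hn : Mult n) (hF : Nice2 F) :
    Continuous (A m n F) := ftInv_continuous (plane_integrable hm hn hF)

lemma weight_sq (k l : ℤ) :
    ENNReal.ofReal (((2 : ℝ) ^ k * (2 : ℝ) ^ l) ^ (-(1 / 6) : ℝ)) ^ 2 = R (-k) * R (-l) := by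
  rw [← R_add, R, ← ENNReal.ofReal_pow (by positivity), ← Real.rpow_natCast,
    ← Real.rpow_mul (by positivity), ← zpow_add₀ (by norm_num)]
  rw [show (-(1 / 6) : ℝ) * ((2 : ℕ) : ℝ) = -(1 / 3) by norm_num, Real.rpow_neg (by positivity),
    zpow_rpow_third, ← zpow_neg, neg_add]

/-- **Refined `L⁶` inequality in the anisotropic Sobolev space `Ḣ_h^{2/3}`.** -/
theorem refined_L6_inequality (φ₀ : ℝ → ℝ) (hφ₀ : IsBump φ₀) :
    ∃ C : ℝ, 0 < C ∧ ∀ f : ℝ × ℝ → ℂ, ContDiff ℝ (⊤ : ℕ∞) f → HasCompactSupport f →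
      (eLpNorm f 6 (volume : Measure (ℝ × ℝ)) ≤
        ENNReal.ofReal C *
          ((⨆ (k : ℤ) (l : ℤ),
              ENNReal.ofReal (((2:ℝ)^k * (2:ℝ)^l) ^ (-(1/6) : ℝ)) *
                eLpNorm (QMN φ₀ ((2:ℝ)^k) ((2:ℝ)^l) f) ⊤ (volume : Measure (ℝ × ℝ))) ^
            ((1 : ℝ)/3)) *
          (eLpNorm (anisoDeriv (2/3) f) 2 (volume : Measure (ℝ × ℝ))) ^ ((2 : ℝ)/3)) ∧
      eLpNorm f 6 (volume : Measure (ℝ × ℝ)) ≤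
        ENNReal.ofReal C * eLpNorm (anisoDeriv (2/3) f) 2 (volume : Measure (ℝ × ℝ)) := by
  obtain ⟨K, h⟩ := exists_bumpBd hφ₀
  -- `E` dominates the constants of both inequalities, and so does `E ^ 6` because `1 ≤ E`
  set E : ℝ≥0∞ := (cT K + 1) * (cB K + 1) ^ 2 with hE
  have hEt : E ≠ ⊤ := by
    have h1 := cT_ne_top K
    have h2 := cB_ne_top K
    finiteness
  have hE1 : 1 ≤ E := one_le_mul le_add_self (one_le_pow₀ le_add_self)
  have hE6 : E ≤ E ^ 6 := by
    calc E = E ^ 1 := (pow_one E).symm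
      _ ≤ E ^ 6 := pow_le_pow_right₀ hE1 (by norm_num)
  have hET : cT K ≤ E := by
    calc cT K = cT K * 1 := (mul_one _).symm
      _ ≤ _ := mul_le_mul' le_self_add (one_le_pow₀ le_add_self)
  have hETB : cT K * cB K ^ 2 ≤ E := by
    refine mul_le_mul' le_self_add ?_
    gcongr
    exact le_self_add
  refine ⟨E.toReal, ENNReal.toReal_pos (by positivity) hEt, fun f hf hc => ?_⟩
  rw [ENNReal.ofReal_toReal hEt]
  have hF := ft_nice2 f hf hc
  simp_rw [QMN_eq]
  set F := ft f with hFdef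
  set B : ℝ≥0∞ := ⨆ (k : ℤ) (l : ℤ), ENNReal.ofReal (((2:ℝ)^k * (2:ℝ)^l) ^ (-(1/6) : ℝ)) *
    eLpNorm (A (psi φ₀ k) (psi φ₀ l) F) ⊤ (volume : Measure (ℝ × ℝ)) with hB
  set H := eLpNorm (anisoDeriv (2/3) f) 2 (volume : Measure (ℝ × ℝ)) with hH
  have hHH : H ^ 2 = H2 F := by
    have hm := (A_continuous third_mult third_mult hF).measurable
    have := eLpNorm_pow_eq 2 (by norm_num) hm
    rw [hH, anisoDeriv_eq]
    exact this.trans (aniso_plancherel third_mult third_sq hF)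
  have hfA : f = A (fun _ => 1) (fun _ => 1) F := by
    unfold A
    simpa [hFdef] using (ftInv_ft f hf hc).symm
  have hA : ∀ k l x y, ‖A (psi φ₀ k) (psi φ₀ l) F (x, y)‖ₑ ^ 2 ≤ R k * R l * B ^ 2 := by
    intro k l x y
    have h1 : ENNReal.ofReal (((2:ℝ)^k * (2:ℝ)^l) ^ (-(1/6) : ℝ)) *
        ‖A (psi φ₀ k) (psi φ₀ l) F (x, y)‖ₑ ≤ B := by
      refine le_trans ?_ (le_iSup₂ (f := fun (k l : ℤ) =>
        ENNReal.ofReal (((2:ℝ)^k * (2:ℝ)^l) ^ (-(1/6) : ℝ)) *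
          eLpNorm (A (psi φ₀ k) (psi φ₀ l) F) ⊤ (volume : Measure (ℝ × ℝ))) k l)
      gcongr
      exact enorm_le_eLpNorm_top (A_continuous (psi_mult h k) (psi_mult h l) hF) (x, y)
    have h2 := pow_le_pow_left₀ (zero_le) h1 2
    rw [mul_pow, weight_sq] at h2
    calc _ = (R (-k) * R k) * (R (-l) * R l) * ‖A (psi φ₀ k) (psi φ₀ l) F (x, y)‖ₑ ^ 2 := by
          rw [R_neg_mul, R_neg_mul, one_mul, one_mul]
      _ = R k * R l * (R (-k) * R (-l) * ‖A (psi φ₀ k) (psi φ₀ l) F (x, y)‖ₑ ^ 2) := by ring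
      _ ≤ _ := by gcongr
  have hBH : B ^ 2 ≤ cB K ^ 2 * H2 F := by
    set X := cB K ^ 2 * H2 F
    have hs : (X ^ (1 / 2 : ℝ)) ^ 2 = X := by
      rw [← ENNReal.rpow_natCast, ← ENNReal.rpow_mul]; norm_num
    have hB' : B ≤ X ^ (1 / 2 : ℝ) := by
      refine iSup₂_le fun k l => ?_
      set w := ENNReal.ofReal (((2:ℝ)^k * (2:ℝ)^l) ^ (-(1/6) : ℝ)) with hw
      have hw2 : w ^ 2 * (R k * R l) = 1 := by
        rw [hw, weight_sq]
        calc _ = (R (-k) * R k) * (R (-l) * R l) := by ring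
          _ = 1 := by rw [R_neg_mul, R_neg_mul, one_mul]
      have hw0 : w ≠ 0 := by
        rintro h0
        rw [h0] at hw2
        simp at hw2
      have hwt : w ≠ ⊤ := ENNReal.ofReal_ne_top
      rw [mul_comm, ← ENNReal.le_div_iff_mul_le (Or.inl hw0) (Or.inl hwt), eLpNorm_exponent_top]
      refine eLpNormEssSup_le_of_ae_enorm_bound (Eventually.of_forall ?_)
      rintro ⟨x, y⟩
      rw [ENNReal.le_div_iff_mul_le (Or.inl hw0) (Or.inl hwt),
        ← ENNReal.pow_le_pow_left_iff (n := 2) (by norm_num), hs, mul_pow]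
      calc _ ≤ R k * R l * X * w ^ 2 := by gcongr; exact A_psi_le h hF k l x y
        _ = (w ^ 2 * (R k * R l)) * X := by ring
        _ = X := by rw [hw2, one_mul]
    calc B ^ 2 ≤ (X ^ (1 / 2 : ℝ)) ^ 2 := by gcongr
      _ = X := hs
  have hN : eLpNorm f 6 volume ^ 6 ≤ cT K * B ^ 2 * H ^ 4 := by
    have h6 := eLpNorm_pow_eq 6 (by norm_num) hf.continuous.measurable
    have := plane_bound h hF (B ^ 2) hBH hA
    rw [← hfA] at this
    calc _ ≤ cT K * B ^ 2 * H2 F ^ 2 := (le_of_eq h6).trans this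
      _ = _ := by rw [← hHH]; ring
  constructor
  · rw [← ENNReal.pow_le_pow_left_iff (n := 6) (by norm_num)]
    have e1 : (B ^ ((1 : ℝ) / 3)) ^ 6 = B ^ 2 := by
      rw [← ENNReal.rpow_natCast, ← ENNReal.rpow_mul, ← ENNReal.rpow_natCast]; norm_num
    have e2 : (H ^ ((2 : ℝ) / 3)) ^ 6 = H ^ 4 := by
      rw [← ENNReal.rpow_natCast, ← ENNReal.rpow_mul, ← ENNReal.rpow_natCast]; norm_num
    rw [mul_pow, mul_pow, e1, e2]
    refine hN.trans ?_
    gcongr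
    exact hET.trans hE6
  · rw [← ENNReal.pow_le_pow_left_iff (n := 6) (by norm_num), mul_pow]
    calc _ ≤ cT K * B ^ 2 * H ^ 4 := hN
      _ ≤ cT K * (cB K ^ 2 * H2 F) * H ^ 4 := by gcongr
      _ = cT K * cB K ^ 2 * H ^ 6 := by rw [← hHH]; ring
      _ ≤ E ^ 6 * H ^ 6 := by gcongr; exact hETB.trans hE6
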